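/- Let G and G' be two finitely generated co-Hopfian virtually free groups. Then the following are equivalent: (1) G and G' are ∀∃-equivalent; (2) G and G' are elementarily equivalent; (3) G and G' are isomorphic. -/

import Mathlib

open FirstOrder Language

/-- Function symbols of the first-order language of groups:
a binary multiplication, a unary inverse and a constant for the identity. -/
inductive GroupFunc : ℕ → Type
  | mul : GroupFunc 2
  | inv : GroupFunc 1
  | one : GroupFunc 0

/-- The first-order language of groups. -/
def groupLang : FirstOrder.Language :=
  { Functions := GroupFunc
    Relations := fun _ => Empty }

/-- Every group is a structure for the language of groups in the natural way. -/
instance groupLangStructure (G : Type*) [Group G] : groupLang.Structure G where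
  funMap {n} f v :=
    match f with
    | .mul => v 0 * v 1
    | .inv => (v 0)⁻¹
    | .one => 1
  RelMap {n} r _ := r.elim

/-- Existential formulas: iterated existential quantifications of a
quantifier-free formula. -/
inductive IsExistentialQF {α : Type*} : ∀ {n : ℕ}, groupLang.BoundedFormula α n → Prop
  | of_isQF {n : ℕ} {φ : groupLang.BoundedFormula α n} (h : φ.IsQF) : IsExistentialQF φ
  | ex {n : ℕ} {φ : groupLang.BoundedFormula α (n + 1)} (h : IsExistentialQF φ) :
      IsExistentialQF φ.ex

/-- Universal formulas: iterated universal quantifications of a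
quantifier-free formula. -/
inductive IsUniversalQF {α : Type*} : ∀ {n : ℕ}, groupLang.BoundedFormula α n → Prop
  | of_isQF {n : ℕ} {φ : groupLang.BoundedFormula α n} (h : φ.IsQF) : IsUniversalQF φ
  | all {n : ℕ} {φ : groupLang.BoundedFormula α (n + 1)} (h : IsUniversalQF φ) :
      IsUniversalQF φ.all

/-- ∀∃-formulas: iterated universal quantifications of an existential formula. -/
inductive IsAE {α : Type*} : ∀ {n : ℕ}, groupLang.BoundedFormula α n → Prop
  | of_existential {n : ℕ} {φ : groupLang.BoundedFormula α n} (h : IsExistentialQF φ) : IsAE φ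
  | all {n : ℕ} {φ : groupLang.BoundedFormula α (n + 1)} (h : IsAE φ) : IsAE φ.all

/-- A group is virtually free if it has a free subgroup of finite index. -/
def VirtuallyFree (G : Type*) [Group G] : Prop :=
  ∃ H : Subgroup G, H.FiniteIndex ∧ Nonempty (IsFreeGroup H)

/-- A group is co-Hopfian if every injective endomorphism is surjective. -/
def CoHopfian (G : Type*) [Group G] : Prop :=
  ∀ φ : G →* G, Function.Injective φ → Function.Surjective φ

/-- Two homomorphisms `φ, φ' : G → G'` are equivalent if they coincide up to
conjugation on every finite subgroup of `G`. -/
def HomEquiv {G G' : Type*} [Group G] [Group G'] (φ φ' : G →* G') : Prop :=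
  ∀ H : Subgroup G, (H : Set G).Finite →
    ∃ g' : G', ∀ h ∈ H, φ' h = g' * φ h * g'⁻¹

/-- Two groups are ∀∃-equivalent if they satisfy the same ∀∃-sentences. -/
def AEEquivalent (G : Type*) (G' : Type*) [Group G] [Group G'] : Prop :=
  ∀ φ : groupLang.Sentence, IsAE φ → (G ⊨ φ ↔ G' ⊨ φ)

/-- Two groups are ∃-equivalent if they satisfy the same existential sentences. -/
def ExistentiallyEquivalent (G : Type*) (G' : Type*) [Group G] [Group G'] : Prop :=
  ∀ φ : groupLang.Sentence, IsExistentialQF φ → (G ⊨ φ ↔ G' ⊨ φ)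

/-- An endomorphism is rigid-testing: `G` is rigid if every endomorphism
equivalent to the identity is an automorphism. -/
def Rigid (G : Type*) [Group G] : Prop :=
  ∀ φ : G →* G, HomEquiv φ (MonoidHom.id G) → Function.Bijective φ

/-- `Out G` is finite, expressed as: the inner automorphisms form a finite index
subgroup of `Aut G`. -/
def OutFinite (G : Type*) [Group G] : Prop :=
  (MulAut.conj : G →* MulAut G).range.FiniteIndex

/-- Iterated composition of an endomorphism. -/
def homPow {G : Type*} [Group G] (φ : G →* G) : ℕ → (G →* G)
  | 0 => MonoidHom.id G
  | n + 1 => φ.comp (homPow φ n)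

/-- An endomorphism `φ` of `G` is class-permuting if some positive power of `φ`
is equivalent to the identity of `G`. -/
def ClassPermuting {G : Type*} [Group G] (φ : G →* G) : Prop :=
  ∃ n : ℕ, 1 ≤ n ∧ HomEquiv (homPow φ n) (MonoidHom.id G)

/-- A maximal finite subgroup: a finite subgroup maximal with respect to
inclusion among finite subgroups. -/
def MaximalFiniteSubgroup {G : Type*} [Group G] (A : Subgroup G) : Prop :=
  (A : Set G).Finite ∧ ∀ B : Subgroup G, (B : Set G).Finite → A ≤ B → A = B

/-- Two subgroups are conjugate. -/
def SubgroupConj {G : Type*} [Group G] (A B : Subgroup G) : Prop :=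
  ∃ g : G, B = A.map (MulAut.conj g).toMonoidHom

/-- A group is strongly co-Hopfian if there is a finite subset `F` of
`G \ {1}` such that every endomorphism whose kernel misses `F` is an
automorphism. -/
def StronglyCoHopfian (G : Type*) [Group G] : Prop :=
  ∃ F : Finset G, (1 : G) ∉ F ∧
    ∀ φ : G →* G, (∀ f ∈ F, φ f ≠ 1) → Function.Bijective φ

/-- A group is finitely presented. -/
def GroupFinitelyPresented (G : Type*) [Group G] : Prop :=
  ∃ (n : ℕ) (rels : Finset (FreeGroup (Fin n))),
    Nonempty (PresentedGroup (rels : Set (FreeGroup (Fin n))) ≃* G)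

/-!
An infinite finitely generated virtually free group acts on a tree with finite stabilizers and
finitely many orbits of edges: the edges are the cuts of minimal weight separating the two ends of
an infinite cyclic subgroup, where ties in the size of the cuts are broken so that these cuts are
nested. Multiplying the edge labels along one orbit of edges by a conjugation-equivariant function
gives an endomorphism of the group. If the group is co-Hopfian, this endomorphism is injective,
since otherwise a translation normalizing an edge stabilizer would give an injective endomorphism
that is not surjective; hence it is an automorphism. An endomorphism that agrees with a conjugation
on every finite subgroup differs from the identity by finitely many such twists, so it is an
automorphism as well: the group is rigid.

Finite subgroups fix vertices, so there are finitely many conjugacy classes of them. Together with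
finite presentability this makes it possible to say in `G'` by a single `∀∃`-sentence that no
homomorphism `G →* G'` reflects conjugacy of the tuples generating finite subgroups. If such
homomorphisms exist in both directions, their composite permutes the finitely many classes of these
tuples, so some power of it preserves every class and is bijective by rigidity; hence `G` and `G'`
are isomorphic.
-/

/-! ### Actions on trees -/

/-- An action of `G` without inversions on a tree with vertex set `V` and oriented edge set `E`.
The tree is encoded by its edges together with the side `half e` of every edge `e` that contains
the source of `e`: the field `cross` says that an edge other than `e` does not cross from one side
of `e` to the other, and `conn` says that the graph is connected. -/
structure TreeAction (G V E : Type*) [Group G] [MulAction G V] [MulAction G E] where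
  src : E → V
  tgt : E → V
  half : E → Set V
  src_smul : ∀ (g : G) e, src (g • e) = g • src e
  tgt_smul : ∀ (g : G) e, tgt (g • e) = g • tgt e
  half_smul : ∀ (g : G) e v, g • v ∈ half (g • e) ↔ v ∈ half e
  src_mem : ∀ e, src e ∈ half e
  tgt_notMem : ∀ e, tgt e ∉ half e
  cross : ∀ e f, f ≠ e → (src f ∈ half e ↔ tgt f ∈ half e)
  conn : ∀ P : V → Prop, (∀ e, P (src e) ↔ P (tgt e)) → ∀ u v, P u → P v

namespace TreeAction

/-- A dart: an edge together with a direction of travel, `forward` meaning from source to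
target. -/
structure Dart (E : Type*) where
  edge : E
  forward : Bool

namespace Dart

variable {G E : Type*} [Group G] [MulAction G E]

/-- The dart travelling along the same edge in the opposite direction. -/
def rev (d : Dart E) : Dart E := ⟨d.edge, !d.forward⟩

instance : MulAction G (Dart E) where
  smul g d := ⟨g • d.edge, d.forward⟩
  one_smul d := congrArg (Dart.mk · d.forward) (one_smul G d.edge)
  mul_smul g h d := congrArg (Dart.mk · d.forward) (mul_smul g h d.edge)

@[simp] theorem rev_rev (d : Dart E) : d.rev.rev = d := by
  simp [rev]

theorem rev_smul (g : G) (d : Dart E) : (g • d).rev = g • d.rev := rfl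

theorem smul_eq_of_smul_edge_eq {g : G} {d : Dart E} (h : g • d.edge = d.edge) : g • d = d :=
  congrArg (Dart.mk · d.forward) h

theorem eq_or_eq_rev_of_edge_eq {d f : Dart E} (h : f.edge = d.edge) : f = d ∨ f = d.rev := by
  rcases d with ⟨e, _ | _⟩ <;> rcases f with ⟨e', _ | _⟩ <;> simp_all [rev]

end Dart

variable {G V E : Type*} [Group G] [MulAction G V] [MulAction G E] (T : TreeAction G V E)

/-- The vertex from which a dart starts. -/
def origin (d : Dart E) : V := if d.forward then T.src d.edge else T.tgt d.edge

/-- The vertex to which a dart points. -/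
def target (d : Dart E) : V := if d.forward then T.tgt d.edge else T.src d.edge

/-- The side of its edge towards which a dart points. -/
def far (d : Dart E) : Set V := if d.forward then (T.half d.edge)ᶜ else T.half d.edge

@[simp] theorem origin_rev (d : Dart E) : T.origin d.rev = T.target d := by
  rcases d with ⟨e, _ | _⟩ <;> simp [origin, target, Dart.rev]

@[simp] theorem target_rev (d : Dart E) : T.target d.rev = T.origin d := by
  rcases d with ⟨e, _ | _⟩ <;> simp [origin, target, Dart.rev]

@[simp] theorem far_rev (d : Dart E) : T.far d.rev = (T.far d)ᶜ := by
  rcases d with ⟨e, _ | _⟩ <;> simp [far, Dart.rev]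

theorem origin_smul (g : G) (d : Dart E) : T.origin (g • d) = g • T.origin d := by
  rcases d with ⟨e, _ | _⟩
  exacts [T.tgt_smul g e, T.src_smul g e]

theorem target_smul (g : G) (d : Dart E) : T.target (g • d) = g • T.target d := by
  rcases d with ⟨e, _ | _⟩
  exacts [T.src_smul g e, T.tgt_smul g e]

theorem smul_mem_far_smul_iff (g : G) (d : Dart E) (v : V) :
    g • v ∈ T.far (g • d) ↔ v ∈ T.far d := by
  rcases d with ⟨e, _ | _⟩
  exacts [T.half_smul g e v, not_congr (T.half_smul g e v)]

theorem smul_mem_half_iff (g : G) (e : E) (v : V) :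
    g • v ∈ T.half e ↔ v ∈ T.half (g⁻¹ • e) := by
  rw [← T.half_smul g (g⁻¹ • e), smul_inv_smul]

theorem origin_notMem_far (d : Dart E) : T.origin d ∉ T.far d := by
  rcases d with ⟨e, _ | _⟩ <;> simp [origin, far, T.src_mem, T.tgt_notMem]

theorem target_mem_far (d : Dart E) : T.target d ∈ T.far d := by
  rcases d with ⟨e, _ | _⟩ <;> simp [target, far, T.src_mem, T.tgt_notMem]

theorem origin_mem_far_iff_target_mem_far {d f : Dart E} (h : f.edge ≠ d.edge) :
    T.origin f ∈ T.far d ↔ T.target f ∈ T.far d := by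
  have := T.cross d.edge f.edge h
  rcases d with ⟨e, _ | _⟩ <;> rcases f with ⟨e', _ | _⟩ <;> simp [origin, target, far] at * <;>
    tauto

theorem walk_induction (P : V → Prop) (h : ∀ d, P (T.origin d) → P (T.target d)) {u : V}
    (hu : P u) (v : V) : P v :=
  T.conn P (fun e => ⟨h ⟨e, true⟩, h ⟨e, false⟩⟩) u v hu

theorem eq_of_forall_src_eq_tgt {K : Type*} (f : V → K) (h : ∀ e, f (T.src e) = f (T.tgt e))
    (u v : V) : f u = f v :=
  T.conn (fun w => f u = f w) (fun e => by rw [h e]) u v rfl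

theorem far_induction (d : Dart E) (P : V → Prop) (h0 : P (T.target d))
    (hs : ∀ f, f.edge ≠ d.edge → T.target f ∈ T.far d → P (T.origin f) → P (T.target f))
    {w : V} (hw : w ∈ T.far d) : P w := by
  refine T.walk_induction (fun w => w ∈ T.far d → P w) (fun f hf ht => ?_) (fun _ => h0) w hw
  by_cases hfd : f.edge = d.edge
  · rcases Dart.eq_or_eq_rev_of_edge_eq hfd with rfl | rfl
    · exact h0
    · rw [target_rev] at ht
      exact absurd ht (T.origin_notMem_far d)
  · exact hs f hfd ht (hf ((T.origin_mem_far_iff_target_mem_far hfd).2 ht))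

theorem far_subset_far {d f : Dart E} (hd : T.origin d ∉ T.far f) (hf : T.origin f ∈ T.far d)
    (hne : f ≠ d.rev) : T.far f ⊆ T.far d := by
  have hedge : f.edge ≠ d.edge := fun h => by
    rcases Dart.eq_or_eq_rev_of_edge_eq h with rfl | rfl
    · exact T.origin_notMem_far _ hf
    · exact hne rfl
  intro w hw
  refine T.far_induction f (· ∈ T.far d) ((T.origin_mem_far_iff_target_mem_far hedge).1 hf)
    (fun k _ htk hok => ?_) hw
  by_cases hkd : k.edge = d.edge
  · rcases Dart.eq_or_eq_rev_of_edge_eq hkd with rfl | rfl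
    · exact T.target_mem_far _
    · rw [target_rev] at htk
      exact absurd htk hd
  · exact (T.origin_mem_far_iff_target_mem_far hkd).1 hok

theorem eq_of_mem_far_of_mem_far {d f : Dart E} (ho : T.origin d = T.origin f) {y : V}
    (hd : y ∈ T.far d) (hf : y ∈ T.far f) : d = f := by
  by_contra hne
  have hedge : f.edge ≠ d.edge := fun h => by
    rcases Dart.eq_or_eq_rev_of_edge_eq h with rfl | rfl
    · exact hne rfl
    · rw [origin_rev] at ho
      exact T.origin_notMem_far d (ho ▸ T.target_mem_far d)
  have hsub : T.far d ⊆ T.far f.rev := by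
    refine T.far_subset_far ?_ ?_ (by rwa [Dart.rev_rev])
    · rw [origin_rev, ← T.origin_mem_far_iff_target_mem_far hedge, ← ho]
      exact T.origin_notMem_far d
    · rw [far_rev, ho]
      exact T.origin_notMem_far f
  rw [far_rev] at hsub
  exact hsub hd hf

theorem exists_dart_toward {x y : V} (h : y ≠ x) : ∃ d, T.origin d = x ∧ y ∈ T.far d := by
  refine (T.walk_induction (fun y => y = x ∨ ∃ d, T.origin d = x ∧ y ∈ T.far d)
    (fun f hf => ?_) (Or.inl rfl) y).resolve_left h
  rcases hf with hf | ⟨d, hd, hfd⟩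
  · exact Or.inr ⟨f, hf, T.target_mem_far f⟩
  · by_cases hedge : f.edge = d.edge
    · rcases Dart.eq_or_eq_rev_of_edge_eq hedge with rfl | rfl
      · exact absurd hfd (T.origin_notMem_far _)
      · exact Or.inl (by rw [target_rev, hd])
    · exact Or.inr ⟨d, hd, (T.origin_mem_far_iff_target_mem_far hedge).1 hfd⟩

theorem pow_succ_smul_origin_mem_far {d : Dart E} {u : G}
    (hu : u • T.origin d = T.target d) (n : ℕ) : u ^ (n + 1) • T.origin d ∈ T.far d := by
  induction n with
  | zero => simpa [hu] using T.target_mem_far d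
  | succ n ih =>
    have hne : (u ^ (n + 1) • d).edge ≠ d.edge := fun h => by
      have hfix : u ^ (n + 1) • d = d := Dart.smul_eq_of_smul_edge_eq h
      rw [← origin_smul, hfix] at ih
      exact T.origin_notMem_far d ih
    have := (T.origin_mem_far_iff_target_mem_far hne).1 (by rwa [origin_smul])
    rwa [target_smul, ← hu, ← mul_smul, ← pow_succ] at this

theorem pow_succ_ne_one {d : Dart E} {u : G} (hu : u • T.origin d = T.target d) (n : ℕ) :
    u ^ (n + 1) ≠ 1 := fun h => by
  have := T.pow_succ_smul_origin_mem_far hu n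
  rw [h, one_smul] at this
  exact T.origin_notMem_far d this

section Distance

/-- The set of edges on the path from `x` to `y`, that is, those having `x` and `y` on different
sides. -/
def separating (x y : V) : Set E := {e | ¬ (x ∈ T.half e ↔ y ∈ T.half e)}

theorem edge_mem_separating_iff {x y : V} {d : Dart E} :
    d.edge ∈ T.separating x y ↔ ¬ (x ∈ T.far d ↔ y ∈ T.far d) := by
  rcases d with ⟨e, _ | _⟩ <;> simp [separating, far]
  tauto

theorem mem_separating_target_iff {d : Dart E} {e : E} (he : e ≠ d.edge) (y : V) :
    e ∈ T.separating (T.target d) y ↔ e ∈ T.separating (T.origin d) y := by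
  have := T.origin_mem_far_iff_target_mem_far (f := d) (d := ⟨e, true⟩) he.symm
  rw [T.edge_mem_separating_iff (d := ⟨e, true⟩), ← this,
    ← T.edge_mem_separating_iff (d := ⟨e, true⟩)]

theorem separating_finite (x y : V) : (T.separating x y).Finite := by
  refine T.walk_induction (fun x => (T.separating x y).Finite) (fun d hd => ?_)
    (u := y) (by simp [separating]) x
  refine (hd.insert d.edge).subset fun e he => ?_
  by_cases hed : e = d.edge
  · exact Or.inl hed
  · exact Or.inr ((T.mem_separating_target_iff hed y).1 he)

/-- The distance between two vertices in the tree. -/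
noncomputable def edgeDist (x y : V) : ℕ := (T.separating x y).ncard

theorem edgeDist_smul (g : G) (x y : V) : T.edgeDist (g • x) (g • y) = T.edgeDist x y := by
  have himage : T.separating (g • x) (g • y) = (fun e => g • e) '' T.separating x y := by
    ext e
    constructor
    · intro he
      exact ⟨g⁻¹ • e, by simpa [separating, T.smul_mem_half_iff] using he, smul_inv_smul g e⟩
    · rintro ⟨e, he, rfl⟩
      simpa [separating, T.half_smul] using he
  rw [edgeDist, himage, Set.ncard_image_of_injective _ (MulAction.injective g), edgeDist]

theorem edgeDist_target_lt {d : Dart E} {s : V} (hs : s ∈ T.far d) :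
    T.edgeDist (T.target d) s < T.edgeDist (T.origin d) s := by
  have hd : d.edge ∉ T.separating (T.target d) s := by
    simp [edge_mem_separating_iff, hs, T.target_mem_far d]
  refine Set.ncard_lt_ncard ⟨fun e he => ?_, fun hsub => hd (hsub ?_)⟩ (T.separating_finite _ _)
  · exact (T.mem_separating_target_iff (by rintro rfl; exact hd he) s).1 he
  · simp [edge_mem_separating_iff, hs, T.origin_notMem_far d]

theorem edgeDist_target_le {d : Dart E} {s y : V} (hs : s ∉ T.far d) (hy : y ∈ T.far d) :
    T.edgeDist (T.target d) s ≤ T.edgeDist y s := by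
  refine Set.ncard_le_ncard (fun e he => ?_) (T.separating_finite _ _)
  obtain ⟨f, rfl, hsf⟩ : ∃ f : Dart E, f.edge = e ∧ s ∈ T.far f := by
    by_cases hse : s ∈ T.half e
    exacts [⟨⟨e, false⟩, rfl, hse⟩, ⟨⟨e, true⟩, rfl, hse⟩]
  have htf : T.target d ∉ T.far f := fun h =>
    T.edge_mem_separating_iff.1 he ⟨fun _ => hsf, fun _ => h⟩
  suffices y ∉ T.far f from T.edge_mem_separating_iff.2 fun h => this (h.2 hsf)
  by_cases hedge : f.edge = d.edge
  · rcases Dart.eq_or_eq_rev_of_edge_eq hedge with rfl | rfl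
    · exact absurd hsf hs
    · simpa using hy
  by_cases hof : T.origin f ∈ T.far d
  · have hod : T.origin d ∉ T.far f := by
      rwa [T.origin_mem_far_iff_target_mem_far (Ne.symm hedge)]
    have hne : f ≠ d.rev := fun h => hedge (h ▸ rfl)
    exact absurd (T.far_subset_far hod hof hne hsf) hs
  · have hne : f ≠ d.rev.rev := fun h => hedge (h ▸ rfl)
    have hsub := T.far_subset_far (d := d.rev) (by rwa [origin_rev]) (by simpa using hof) hne
    rw [far_rev] at hsub
    exact fun hyf => hsub hyf hy

theorem edgeDist_target_lt_of_ne {d : Dart E} {s y : V} (hs : s ∉ T.far d) (hy : y ∈ T.far d)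
    (hne : y ≠ T.target d) : T.edgeDist (T.target d) s < T.edgeDist y s := by
  obtain ⟨f, hf, hyf⟩ := T.exists_dart_toward hne
  have hsf : s ∉ T.far f := fun h => by
    have hrev : f = d.rev :=
      T.eq_of_mem_far_of_mem_far (hf.trans (T.origin_rev d).symm) h (by simpa using hs)
    rw [hrev, far_rev] at hyf
    exact hyf hy
  calc T.edgeDist (T.target d) s = T.edgeDist (T.target f.rev) s := by rw [target_rev, hf]
    _ < T.edgeDist (T.origin f.rev) s := T.edgeDist_target_lt (by simpa using hsf)
    _ = T.edgeDist (T.target f) s := by rw [origin_rev]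
    _ ≤ T.edgeDist y s := T.edgeDist_target_le hsf hyf

theorem not_far_smul_ssubset_of_notMem {g : G} {v : V} (hg : g • v = v) {d : Dart E}
    (hv : v ∉ T.far d) : ¬ T.far (g • d) ⊂ T.far d := fun hsub => by
  have hne : T.target (g • d) ≠ T.target d := fun h => by
    have hrev : (g • d).rev = d.rev := T.eq_of_mem_far_of_mem_far (y := v) (by simpa using h)
      (by simpa using fun h => hv (hsub.1 h)) (by simpa using hv)
    have hfix : g • d = d := by simpa using congrArg Dart.rev hrev
    exact hsub.2 (by rw [hfix])
  refine (T.edgeDist_target_lt_of_ne hv (hsub.1 (T.target_mem_far (g • d))) hne).ne ?_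
  nth_rw 2 [← hg]
  rw [target_smul, edgeDist_smul]

theorem not_far_smul_ssubset_of_smul_eq {g : G} {v : V} (hg : g • v = v) (d : Dart E) :
    ¬ T.far (g • d) ⊂ T.far d := fun hsub => by
  by_cases hv : v ∈ T.far d
  · have hgv : v ∈ T.far (g • d) := by
      rw [← hg]
      exact (T.smul_mem_far_smul_iff g d v).2 hv
    refine T.not_far_smul_ssubset_of_notMem (g := g⁻¹) (d := (g • d).rev)
      (inv_smul_eq_iff.2 hg.symm) (by simpa using hgv) ?_
    rw [← Dart.rev_smul, inv_smul_smul, far_rev, far_rev]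
    exact compl_lt_compl_iff_lt.2 hsub
  · exact T.not_far_smul_ssubset_of_notMem hg hv hsub

theorem smul_origin_ne_target_of_isOfFinOrder {h : G} (hh : IsOfFinOrder h) (d : Dart E) :
    h • T.origin d ≠ T.target d := fun heq => by
  obtain ⟨n, hn, hpow⟩ := isOfFinOrder_iff_pow_eq_one.1 hh
  obtain ⟨k, rfl⟩ := Nat.exists_eq_succ_of_ne_zero hn.ne'
  exact T.pow_succ_ne_one heq k hpow

/-- A vertex at minimal distance from a finite orbit is fixed: moving from it one step towards any
of its translates would bring it closer to the orbit. -/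
theorem exists_smul_eq_of_finite [Nonempty V] (T : TreeAction G V E) (H : Subgroup G)
    [Finite H] : ∃ v : V, ∀ h ∈ H, h • v = v := by
  classical
  have := Fintype.ofFinite H
  obtain ⟨v₀⟩ := ‹Nonempty V›
  let radius : V → ℕ := fun x => Finset.univ.sup fun h : H => T.edgeDist x (h • v₀)
  have le_radius (x : V) (h : H) : T.edgeDist x (h • v₀) ≤ radius x :=
    Finset.le_sup (f := fun h : H => T.edgeDist x (h • v₀)) (Finset.mem_univ h)
  have radius_smul_le (k : H) (x : V) : radius (k • x) ≤ radius x := by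
    refine Finset.sup_le fun h _ => ?_
    calc T.edgeDist (k • x) (h • v₀) = T.edgeDist (k • x) (k • (k⁻¹ * h) • v₀) := by
          rw [← mul_smul, mul_inv_cancel_left]
      _ = T.edgeDist x ((k⁻¹ * h) • v₀) := T.edgeDist_smul k.1 x _
      _ ≤ radius x := le_radius x _
  have : Nonempty V := ⟨v₀⟩
  let x := Function.argmin radius
  refine ⟨x, fun h hh => by_contra fun hne => ?_⟩
  obtain ⟨d, hd, hxd⟩ := T.exists_dart_toward hne
  have hfin : IsOfFinOrder h := H.subtype.isOfFinOrder (isOfFinOrder_of_finite (⟨h, hh⟩ : H))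
  have htarget : h • x ≠ T.target d := hd ▸ T.smul_origin_ne_target_of_isOfFinOrder hfin d
  have hcloser (s : H) : T.edgeDist (T.target d) (s • v₀) < radius x := by
    by_cases hs : s • v₀ ∈ T.far d
    · exact (T.edgeDist_target_lt hs).trans_le (hd ▸ le_radius x s)
    · exact (T.edgeDist_target_lt_of_ne hs hxd htarget).trans_le
        ((le_radius _ s).trans (radius_smul_le ⟨h, hh⟩ x))
  refine Function.not_lt_argmin radius (T.target d) ?_
  exact (Finset.sup_lt_iff (bot_le.trans_lt (hcloser 1))).2 fun s _ => hcloser s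

end Distance

end TreeAction

/-! ### Potentials and twisted endomorphisms -/

namespace TreeAction

variable {G V E : Type*} [Group G] [MulAction G V] [MulAction G E] (T : TreeAction G V E)

section Potential

variable {K : Type*} [Group K]

/-- The value on darts of a function on edges: reversing a dart inverts the value. -/
def dartValue (m : E → K) (d : Dart E) : K := if d.forward then m d.edge else (m d.edge)⁻¹

theorem dartValue_rev (m : E → K) (d : Dart E) : dartValue m d.rev = (dartValue m d)⁻¹ := by
  rcases d with ⟨e, _ | _⟩ <;> simp [dartValue, Dart.rev]

/-- A potential of `m : E → K`: a function on vertices whose increments along the edges are given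
by `m`. -/
def IsPotential (m : E → K) (a : V → K) : Prop := ∀ e, a (T.tgt e) = a (T.src e) * m e

/-- `T.ReducedPath m d k x` says that the path without backtracking that starts with the dart `d`
and ends at the vertex `x` has `k` as the product of the values of `m` along it. -/
inductive ReducedPath (m : E → K) : Dart E → K → V → Prop
  | single (d : Dart E) : ReducedPath m d (dartValue m d) (T.target d)
  | cons (d f : Dart E) (k : K) (x : V) (hf : T.origin f = T.target d) (hne : f ≠ d.rev)
      (hp : ReducedPath m f k x) : ReducedPath m d (dartValue m d * k) x

variable {T} {m : E → K}

theorem IsPotential.target_eq {a : V → K} (ha : T.IsPotential m a) (d : Dart E) :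
    a (T.target d) = a (T.origin d) * dartValue m d := by
  rcases d with ⟨e, _ | _⟩ <;> simp [origin, target, dartValue, ha e]

namespace ReducedPath

theorem mem_far {d : Dart E} {k : K} {x : V} (h : T.ReducedPath m d k x) : x ∈ T.far d := by
  induction h with
  | single d => exact T.target_mem_far d
  | cons d f _ _ hf hne _ ih =>
    refine T.far_subset_far (fun hd => hne ?_) (hf ▸ T.target_mem_far d) hne ih
    exact T.eq_of_mem_far_of_mem_far (hf.trans (T.origin_rev d).symm) hd
      (by simpa using T.origin_notMem_far d)

theorem product_unique {d : Dart E} {k : K} {x : V} (h : T.ReducedPath m d k x) :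
    ∀ {l : K}, T.ReducedPath m d l x → k = l := by
  induction h with
  | single d =>
    intro l h'
    generalize hx : T.target d = x at h'
    cases h' with
    | single => rfl
    | cons _ f _ _ hf _ hp =>
      have := hp.mem_far
      rw [← hx, ← hf] at this
      exact absurd this (T.origin_notMem_far _)
  | cons d f k x hf _ hp ih =>
    intro l h'
    cases h' with
    | single => exact absurd (hf ▸ hp.mem_far) (T.origin_notMem_far _)
    | cons _ f' _ _ hf' _ hp' =>
      obtain rfl := T.eq_of_mem_far_of_mem_far (hf.trans hf'.symm) hp.mem_far hp'.mem_far
      rw [ih hp']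

theorem append {d : Dart E} {k : K} {x : V} (h : T.ReducedPath m d k x) {f : Dart E}
    (hf : T.origin f = x) :
    T.ReducedPath m d (k * dartValue m f) (T.target f) ∨
      T.target f = T.origin d ∧ k * dartValue m f = 1 := by
  induction h with
  | single d =>
    by_cases hfd : f = d.rev
    · exact Or.inr ⟨by rw [hfd, target_rev], by rw [hfd, dartValue_rev, mul_inv_cancel]⟩
    · exact Or.inl (cons d f _ _ hf hfd (single f))
  | cons d f' k x hf' hne _ ih =>
    rw [mul_assoc]
    rcases ih hf with hp | ⟨htarget, hk⟩
    · exact Or.inl (cons d f' _ _ hf' hne hp)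
    · exact Or.inl (by simpa only [hk, htarget, hf', mul_one] using single d)

theorem exists_of_ne (T : TreeAction G V E) (m : E → K) {x y : V} (h : y ≠ x) :
    ∃ d k, T.origin d = x ∧ T.ReducedPath m d k y := by
  refine (T.walk_induction (fun y => y = x ∨ ∃ d k, T.origin d = x ∧ T.ReducedPath m d k y)
    (fun f hf => ?_) (Or.inl rfl) y).resolve_left h
  rcases hf with hf | ⟨d, k, hd, hp⟩
  · exact Or.inr ⟨f, _, hf, single f⟩
  · rcases hp.append rfl with hp | ⟨htarget, -⟩
    · exact Or.inr ⟨d, _, hd, hp⟩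
    · exact Or.inl (htarget.trans hd)

theorem potential_eq {a : V → K} (ha : T.IsPotential m a) {d : Dart E} {k : K} {x : V}
    (h : T.ReducedPath m d k x) : a x = a (T.origin d) * k := by
  induction h with
  | single d => exact ha.target_eq d
  | cons d f k x hf _ _ ih => rw [ih, hf, ha.target_eq, mul_assoc]

end ReducedPath

theorem exists_isPotential (T : TreeAction G V E) (m : E → K) (r : V) :
    ∃ a : V → K, a r = 1 ∧ T.IsPotential m a := by
  let IsValue : V → K → Prop := fun v k =>
    (v = r ∧ k = 1) ∨ ∃ d, T.origin d = r ∧ T.ReducedPath m d k v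
  have exists_value (v : V) : ∃ k, IsValue v k := by
    by_cases h : v = r
    · exact ⟨1, Or.inl ⟨h, rfl⟩⟩
    · obtain ⟨d, k, hd, hp⟩ := ReducedPath.exists_of_ne T m h
      exact ⟨k, Or.inr ⟨d, hd, hp⟩⟩
  have value_unique {v : V} {k l : K} : IsValue v k → IsValue v l → k = l := by
    rintro (⟨rfl, rfl⟩ | ⟨d, hd, hp⟩) (⟨hv, rfl⟩ | ⟨d', hd', hp'⟩)
    · rfl
    · exact absurd (hd' ▸ hp'.mem_far) (T.origin_notMem_far d')
    · exact absurd (hd ▸ hv ▸ hp.mem_far) (T.origin_notMem_far d)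
    · obtain rfl := T.eq_of_mem_far_of_mem_far (hd.trans hd'.symm) hp.mem_far hp'.mem_far
      exact hp.product_unique hp'
  choose a ha using exists_value
  have increment (f : Dart E) : IsValue (T.target f) (a (T.origin f) * dartValue m f) := by
    rcases ha (T.origin f) with ⟨hf, hone⟩ | ⟨d, hd, hp⟩
    · rw [hone, one_mul]
      exact Or.inr ⟨f, hf, .single f⟩
    · rcases hp.append rfl with hp | ⟨htarget, hone⟩
      · exact Or.inr ⟨d, hd, hp⟩
      · exact Or.inl ⟨htarget.trans hd, hone⟩
  exact ⟨a, value_unique (ha r) (Or.inl ⟨rfl, rfl⟩),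
    fun e => value_unique (ha _) (increment ⟨e, true⟩)⟩

end Potential

section Twist

/-- `m : E → G` is equivariant for the action of `G` on itself by conjugation. -/
def IsConjEquivariant (m : E → G) : Prop := ∀ (g : G) e, m (g • e) = g * m e * g⁻¹

theorem IsConjEquivariant.dartValue_smul {m : E → G} (hm : IsConjEquivariant m) (g : G)
    (d : Dart E) : dartValue m (g • d) = g * dartValue m d * g⁻¹ := by
  rcases d with ⟨e, _ | _⟩
  · change (m (g • e))⁻¹ = g * (m e)⁻¹ * g⁻¹
    rw [hm]
    group
  · exact hm g e

theorem IsConjEquivariant.commute_dartValue {m : E → G} (hm : IsConjEquivariant m) {g : G}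
    {d : Dart E} (h : g • d = d) : Commute g (dartValue m d) := by
  have := hm.dartValue_smul g d
  rw [h, eq_mul_inv_iff_mul_eq] at this
  exact this.symm

variable {T} {a : V → G} {m : E → G}

theorem IsPotential.smul_eq (ha : T.IsPotential m a) (hm : IsConjEquivariant m) (r : V) (g : G)
    (v : V) : a (g • v) = (a (g • r) * g * (a r)⁻¹) * a v * g⁻¹ := by
  have hconst := T.eq_of_forall_src_eq_tgt (fun v => a (g • v) * g * (a v)⁻¹) (fun e => by
    rw [ha, ← T.tgt_smul, ← T.src_smul, ha, hm]
    group) v r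
  rw [← hconst]
  group

/-- The endomorphism of `G` obtained by multiplying the edge labels of the graph of groups
decomposition by `m`, read off from the base vertex `r`. -/
def twist (ha : T.IsPotential m a) (hm : IsConjEquivariant m) (r : V) : G →* G :=
  MonoidHom.mk' (fun g => a (g • r) * g * (a r)⁻¹) fun g h => by
    rw [mul_smul, ha.smul_eq hm r g (h • r)]
    group

theorem twist_apply (ha : T.IsPotential m a) (hm : IsConjEquivariant m) (r : V) (g : G) :
    twist ha hm r g = a (g • r) * g * (a r)⁻¹ := rfl

/-- The twisted tree maps to the tree by sending the end of a path with product `k` to `k • x`.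
The hypotheses say that this map does not fold two darts with a common origin, and a path is then
never mapped back to its origin. -/
theorem ReducedPath.smul_mem_far (h0 : ∀ d, dartValue m d • T.target d ≠ T.origin d)
    (h1 : ∀ {c d f}, T.origin c = T.origin d → T.origin f = T.origin c →
      dartValue m c • T.target c ∈ T.far f → dartValue m d • T.target d ∈ T.far f → c = d)
    {d : Dart E} {k : G} {x : V} (h : T.ReducedPath m d k x) {f : Dart E}
    (hf : T.origin f = T.origin d) (hd : dartValue m d • T.target d ∈ T.far f) :
    k • x ∈ T.far f := by
  induction h generalizing f with
  | single d => exact hd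
  | cons d d' k x hd' hne _ ih =>
    obtain ⟨f', hf', hmem⟩ := T.exists_dart_toward (h0 d')
    have hkx := (T.smul_mem_far_smul_iff (dartValue m d) f' _).2 (ih hf' hmem)
    rw [← mul_smul] at hkx
    have horigin : T.origin (dartValue m d • f') = dartValue m d • T.target d := by
      rw [origin_smul, hf', hd']
    have hnot : T.origin f ∉ T.far (dartValue m d • f') := fun hmem' => by
      rw [← smul_inv_smul (dartValue m d) (T.origin f), smul_mem_far_smul_iff, hf] at hmem'
      refine hne (h1 (by rw [hd', origin_rev]) hf' hmem ?_)
      rwa [dartValue_rev, target_rev]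
    refine T.far_subset_far hnot (by rwa [horigin]) (fun heq => ?_) hkx
    rw [heq, far_rev] at hnot
    exact hnot (T.origin_notMem_far f)

theorem twist_injective (ha : T.IsPotential m a) (hm : IsConjEquivariant m) (r : V)
    (h0 : ∀ d, dartValue m d • T.target d ≠ T.origin d)
    (h1 : ∀ {c d f}, T.origin c = T.origin d → T.origin f = T.origin c →
      dartValue m c • T.target c ∈ T.far f → dartValue m d • T.target d ∈ T.far f → c = d) :
    Function.Injective (twist ha hm r) := by
  rw [injective_iff_map_eq_one]
  intro g hg
  rw [twist_apply] at hg
  by_cases hgr : g • r = r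
  · rwa [hgr, conj_eq_one_iff] at hg
  · exfalso
    obtain ⟨d, k, rfl, hp⟩ := ReducedPath.exists_of_ne T m hgr
    have hkg : k * g = 1 := by
      rwa [hp.potential_eq ha, mul_assoc (a _), conj_eq_one_iff] at hg
    obtain ⟨f, hf, hmem⟩ := T.exists_dart_toward (h0 d)
    have := hp.smul_mem_far h0 h1 hf hmem
    rw [← mul_smul, hkg, one_smul, ← hf] at this
    exact T.origin_notMem_far f this

theorem twist_injective_of_smul_target_mem_far (ha : T.IsPotential m a)
    (hm : IsConjEquivariant m) (r : V) (h : ∀ d, dartValue m d • T.target d ∈ T.far d) :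
    Function.Injective (twist ha hm r) :=
  twist_injective ha hm r (fun d hd => T.origin_notMem_far d (hd ▸ h d)) fun hcd hfc hc hd =>
    (T.eq_of_mem_far_of_mem_far hfc.symm (h _) hc).trans
      (T.eq_of_mem_far_of_mem_far (hfc.trans hcd) hd (h _))

end Twist

end TreeAction

theorem exists_pow_commute_of_mem_normalizer {G : Type*} [Group G] {S : Subgroup G} [Finite S]
    {u : G} (hu : u ∈ Subgroup.normalizer (S : Set G)) :
    ∃ N, 0 < N ∧ ∀ g ∈ S, Commute g (u ^ N) := by
  have : Finite (MulAut S) := Finite.of_injective (fun f => (f : S → S)) DFunLike.coe_injective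
  let x : MulAut S := S.normalizerMonoidHom ⟨u, hu⟩
  refine ⟨orderOf x, orderOf_pos x, fun g hg => ?_⟩
  have hpow : S.normalizerMonoidHom (⟨u, hu⟩ ^ orderOf x) = 1 := by
    rw [map_pow]
    exact pow_orderOf_eq_one x
  have hconj : u ^ orderOf x * g * (u ^ orderOf x)⁻¹ = g :=
    congrArg (fun f : MulAut S => (f ⟨g, hg⟩ : G)) hpow
  exact (mul_inv_eq_iff_eq_mul.1 hconj).symm

namespace TreeAction

variable {G V E : Type*} [Group G] [MulAction G V] [MulAction G E] {T : TreeAction G V E}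

theorem exists_isConjEquivariant_of_commute [MulAction.IsPretransitive G E] {e : E} {z : G}
    (hz : ∀ g ∈ MulAction.stabilizer G e, Commute g z) :
    ∃ m : E → G, IsConjEquivariant m ∧ m e = z := by
  choose h hh using MulAction.exists_smul_eq G e
  let m : E → G := fun f => h f * z * (h f)⁻¹
  have hm (g : G) : m (g • e) = g * z * g⁻¹ := by
    have hstab : (h (g • e))⁻¹ * g ∈ MulAction.stabilizer G e := by
      rw [MulAction.mem_stabilizer_iff, mul_smul, inv_smul_eq_iff, hh]
    calc m (g • e) = h (g • e) * (z * ((h (g • e))⁻¹ * g)) * g⁻¹ := by simp only [m]; group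
      _ = h (g • e) * ((h (g • e))⁻¹ * g * z) * g⁻¹ := by rw [hz _ hstab]
      _ = g * z * g⁻¹ := by group
  refine ⟨m, fun g f => ?_, by simpa using hm 1⟩
  rw [← hh f, ← mul_smul, hm, hm]
  group

theorem IsPotential.exists_hom_of_const [Nonempty V] {K : Type*} [CommGroup K] {b : V → K} {z : K}
    (hb : T.IsPotential (fun _ => z) b) : ∃ ε : G →* K, ∀ g v, b (g • v) = ε g * b v := by
  obtain ⟨r⟩ := ‹Nonempty V›
  have hconst (g : G) (v : V) : b (g • v) * (b v)⁻¹ = b (g • r) * (b r)⁻¹ :=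
    T.eq_of_forall_src_eq_tgt (fun v => b (g • v) * (b v)⁻¹) (fun e => by
      rw [← T.tgt_smul, ← T.src_smul, hb, hb, mul_inv, mul_mul_mul_comm, mul_inv_cancel, mul_one])
      v r
  refine ⟨MonoidHom.mk' (fun g => b (g • r) * (b r)⁻¹) fun g h => ?_,
    fun g v => (mul_inv_eq_iff_eq_mul.1 (hconst g v))⟩
  rw [← hconst g (h • r), mul_smul, ← mul_assoc, inv_mul_cancel_right]

theorem map_twist {K : Type*} [CommGroup K] {a : V → G} {m : E → G} (ha : T.IsPotential m a)
    (hm : IsConjEquivariant m) {b : V → K} {z : K} (hb : T.IsPotential (fun _ => z) b)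
    {ε : G →* K} (hε : ∀ g v, b (g • v) = ε g * b v) {N : ℕ} (hN : ∀ e, ε (m e) = z ^ N) (r : V)
    (g : G) : ε (twist ha hm r g) = ε g ^ (N + 1) := by
  have hconst : ε (a (g • r)) * (b (g • r) ^ N)⁻¹ = ε (a r) * (b r ^ N)⁻¹ :=
    T.eq_of_forall_src_eq_tgt (fun v => ε (a v) * (b v ^ N)⁻¹) (fun e => by
      rw [ha, hb, map_mul, hN, mul_pow, mul_inv, mul_mul_mul_comm, mul_inv_cancel, mul_one]) _ _
  have ha' : ε (a (g • r)) = ε g ^ N * ε (a r) := by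
    rw [mul_inv_eq_iff_eq_mul, hε, mul_pow] at hconst
    rw [hconst, mul_comm (ε g ^ N), mul_assoc, inv_mul_cancel_left, mul_comm]
  rw [twist_apply, map_mul, map_mul, map_inv, ha', mul_right_comm, mul_inv_cancel_right, pow_succ]

theorem IsConjEquivariant.dartValue_mem_normalizer {m : E → G} (hm : IsConjEquivariant m)
    (d : Dart E) :
    dartValue m d ∈ Subgroup.normalizer (MulAction.stabilizer G d.edge : Set G) := by
  have hcomm {g : G} (hg : g ∈ MulAction.stabilizer G d.edge) : Commute g (dartValue m d) :=
    hm.commute_dartValue (Dart.smul_eq_of_smul_edge_eq hg)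
  refine Subgroup.mem_normalizer_iff.2 fun g => ⟨fun hg => ?_, fun hg => ?_⟩
  · rwa [← hcomm hg, mul_inv_cancel_right]
  · have := hcomm hg
    rw [Commute, SemiconjBy, mul_assoc, mul_assoc, inv_mul_cancel, mul_one] at this
    rwa [mul_left_cancel this]

theorem pow_smul_target_mem_far {d : Dart E} {u : G} (hu : u • T.origin d = T.target d) (n : ℕ) :
    u ^ n • T.target d ∈ T.far d := by
  rw [← hu, ← mul_smul, ← pow_succ]
  exact T.pow_succ_smul_origin_mem_far hu n

section OneOrbit

variable [MulAction.IsPretransitive G E]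

theorem smul_target_mem_far_of_pow {e : E} {u : G} (hu : u • T.src e = T.tgt e) {N : ℕ}
    {m : E → G} (hm : IsConjEquivariant m) (hme : m e = u ^ N) (d : Dart E) :
    dartValue m d • T.target d ∈ T.far d := by
  have hd (d : Dart E) (g : G) (h : dartValue m d • T.target d ∈ T.far d) :
      dartValue m (g • d) • T.target (g • d) ∈ T.far (g • d) := by
    rwa [hm.dartValue_smul, target_smul, ← mul_smul, inv_mul_cancel_right, mul_smul,
      smul_mem_far_smul_iff]
  rcases d with ⟨f, o⟩
  obtain ⟨g, rfl⟩ := MulAction.exists_smul_eq G e f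
  refine hd ⟨e, o⟩ g ?_
  cases o
  · have hu' : u⁻¹ • T.origin ⟨e, false⟩ = T.target ⟨e, false⟩ := inv_smul_eq_iff.2 hu.symm
    simpa [dartValue, hme] using pow_smul_target_mem_far hu' N
  · have hu' : u • T.origin ⟨e, true⟩ = T.target ⟨e, true⟩ := hu
    simpa [dartValue, hme] using pow_smul_target_mem_far hu' N

/-- Such a `u` has a power `u ^ N` centralizing the stabilizer of `e`. Twisting by `u ^ N` is
injective but multiplies the height homomorphism `G → ℤ` by `N + 1`, so that its image misses
`u`. -/
theorem notMem_normalizer_of_smul_src_eq_tgt (T : TreeAction G V E) (hco : CoHopfian G) {e : E}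
    [Finite (MulAction.stabilizer G e)] {u : G} (hu : u • T.src e = T.tgt e) :
    u ∉ Subgroup.normalizer (MulAction.stabilizer G e : Set G) := fun hn => by
  have : Nonempty V := ⟨T.src e⟩
  obtain ⟨N, hN, hcomm⟩ := exists_pow_commute_of_mem_normalizer hn
  obtain ⟨m, hm, hme⟩ := exists_isConjEquivariant_of_commute hcomm
  obtain ⟨a, -, ha⟩ := T.exists_isPotential m (T.src e)
  obtain ⟨g, hg⟩ := hco _ (twist_injective_of_smul_target_mem_far ha hm (T.src e)
    (smul_target_mem_far_of_pow hu hm hme)) u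
  obtain ⟨b, hb0, hb⟩ :=
    T.exists_isPotential (fun _ : E => Multiplicative.ofAdd (1 : ℤ)) (T.src e)
  obtain ⟨ε, hε⟩ := hb.exists_hom_of_const
  have hεu : ε u = Multiplicative.ofAdd 1 := by
    have := hε u (T.src e)
    rw [hu, hb, hb0] at this
    simpa using this.symm
  have hεm (f : E) : ε (m f) = Multiplicative.ofAdd 1 ^ N := by
    obtain ⟨k, rfl⟩ := MulAction.exists_smul_eq G e f
    rw [hm, hme, map_mul, map_mul, map_inv, map_pow, hεu, mul_inv_cancel_comm]
  have hpow := map_twist ha hm hb hε hεm (T.src e) g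
  rw [hg, hεu] at hpow
  have hdvd : ((N + 1 : ℕ) : ℤ) ∣ 1 :=
    ⟨Multiplicative.toAdd (ε g), by simpa using congrArg Multiplicative.toAdd hpow⟩
  have := Int.le_of_dvd one_pos hdvd
  omega

theorem notMem_normalizer_of_smul_origin_eq_target (T : TreeAction G V E) (hco : CoHopfian G)
    {d : Dart E} [Finite (MulAction.stabilizer G d.edge)] {u : G}
    (hu : u • T.origin d = T.target d) :
    u ∉ Subgroup.normalizer (MulAction.stabilizer G d.edge : Set G) := by
  rcases d with ⟨e, _ | _⟩
  · exact fun hn => T.notMem_normalizer_of_smul_src_eq_tgt hco (u := u⁻¹)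
      (inv_smul_eq_iff.2 hu.symm) (inv_mem hn)
  · exact T.notMem_normalizer_of_smul_src_eq_tgt hco hu

theorem stabilizer_eq_of_smul_target_mem_far [∀ e : E, Finite (MulAction.stabilizer G e)]
    {m : E → G} (hm : IsConjEquivariant m) {c f : Dart E} (hf : T.origin f = T.origin c)
    (hmem : dartValue m c • T.target c ∈ T.far f) :
    MulAction.stabilizer G c.edge = MulAction.stabilizer G f.edge := by
  have hle : MulAction.stabilizer G c.edge ≤ MulAction.stabilizer G f.edge := fun g hg => by
    have hgc : g • c = c := Dart.smul_eq_of_smul_edge_eq hg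
    have hfix : g • dartValue m c • T.target c = dartValue m c • T.target c := by
      rw [← mul_smul, hm.commute_dartValue hgc, mul_smul, ← target_smul, hgc]
    have hmem' : dartValue m c • T.target c ∈ T.far (g • f) := by
      rwa [← hfix, smul_mem_far_smul_iff]
    exact congrArg Dart.edge (T.eq_of_mem_far_of_mem_far
      (by rw [origin_smul, hf, ← origin_smul, hgc]) hmem' hmem)
  obtain ⟨g, hg⟩ := MulAction.exists_smul_eq G f.edge c.edge
  have hcard := Nat.card_congr (MulAction.stabilizerEquivStabilizer hg.symm).toEquiv
  exact SetLike.coe_injective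
    (Set.eq_of_subset_of_ncard_le hle hcard.le (Set.toFinite _))

/-- If the tree has a single orbit of edges, a folding of the twisted tree would provide an
element translating an edge and normalizing its stabilizer. -/
theorem twist_injective_of_isPretransitive [∀ e : E, Finite (MulAction.stabilizer G e)]
    (hco : CoHopfian G) {a : V → G} {m : E → G} (ha : T.IsPotential m a)
    (hm : IsConjEquivariant m) (r : V) : Function.Injective (twist ha hm r) := by
  refine twist_injective ha hm r (fun d hd => ?_) fun {c d f} hcd hfc hc hd => ?_
  · exact T.notMem_normalizer_of_smul_origin_eq_target hco (u := (dartValue m d)⁻¹)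
      (inv_smul_eq_iff.2 hd.symm) (inv_mem (hm.dartValue_mem_normalizer d))
  have hstab := stabilizer_eq_of_smul_target_mem_far hm hfc hc
  have hstab' := hstab.trans (stabilizer_eq_of_smul_target_mem_far hm (hfc.trans hcd) hd).symm
  obtain ⟨g, hg⟩ := MulAction.exists_smul_eq G c.edge d.edge
  rcases Dart.eq_or_eq_rev_of_edge_eq (d := g • c) (f := d) hg.symm with rfl | hrev
  · have hgf : dartValue m (g • c) • T.target (g • c) ∈ T.far (g • f) := by
      rwa [hm.dartValue_smul, target_smul, ← mul_smul, inv_mul_cancel_right, mul_smul,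
        smul_mem_far_smul_iff]
    have hfix : g • f = f := T.eq_of_mem_far_of_mem_far
      (by rw [origin_smul, hfc, ← origin_smul, hcd]) hgf hd
    have hgc : g ∈ MulAction.stabilizer G c.edge := hstab ▸ congrArg Dart.edge hfix
    exact (Dart.smul_eq_of_smul_edge_eq hgc).symm
  · refine absurd ?_ (T.notMem_normalizer_of_smul_origin_eq_target hco (d := c) (u := g⁻¹) ?_)
    · refine inv_mem (Subgroup.mem_normalizer_iff.2 fun x => ?_)
      conv_rhs => rw [hstab']
      rw [MulAction.mem_stabilizer_iff, MulAction.mem_stabilizer_iff, ← hg, mul_smul,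
        inv_smul_smul, mul_smul, smul_left_cancel_iff]
    · rw [inv_smul_eq_iff, ← target_smul, ← origin_rev, ← hrev, hcd]

end OneOrbit

end TreeAction

/-! ### Rigidity from actions on trees -/

/-- Up to conjugation, all finite subgroups of `G` are contained in a common finite set; in other
words, `G` has finitely many conjugacy classes of finite subgroups. -/
def FiniteSubgroupsConjBounded (G : Type*) [Group G] : Prop :=
  ∃ B : Set G, B.Finite ∧ ∀ H : Subgroup G, (H : Set G).Finite → ∃ g : G, ∀ h ∈ H, g * h * g⁻¹ ∈ B

namespace TreeAction

variable {G V E : Type*} [Group G] [MulAction G V] [MulAction G E] (T : TreeAction G V E)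

section Collapse

/-- Two vertices are identified when no edge of the orbit of `e₁` separates them. -/
def collapseSetoid (e₁ : E) : Setoid V where
  r v w := ∀ g : G, v ∈ T.half (g • e₁) ↔ w ∈ T.half (g • e₁)
  iseqv := ⟨fun _ _ => Iff.rfl, fun h g => (h g).symm, fun h h' g => (h g).trans (h' g)⟩

/-- The vertices of the tree obtained by collapsing all edges outside of the orbit of `e₁`. -/
def CollapsedVertex (e₁ : E) : Type _ := Quotient (T.collapseSetoid e₁)

variable {e₁ : E}

/-- The image of a vertex in the collapsed tree. -/
def toCollapsed (v : V) : T.CollapsedVertex e₁ := Quotient.mk _ v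

instance : MulAction G (T.CollapsedVertex e₁) where
  smul g := Quotient.map (g • ·) fun v w h k => by
    have := h (g⁻¹ * k)
    rw [mul_smul] at this
    simpa only [smul_mem_half_iff] using this
  one_smul := Quotient.ind fun v => congrArg T.toCollapsed (one_smul G v)
  mul_smul g h := Quotient.ind fun v => congrArg T.toCollapsed (mul_smul g h v)

theorem toCollapsed_src_eq {e : E} (he : e ∉ MulAction.orbit G e₁) :
    T.toCollapsed (e₁ := e₁) (T.src e) = T.toCollapsed (T.tgt e) :=
  Quotient.sound fun g => T.cross _ _ fun h => he ⟨g, h.symm⟩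

/-- The action on the tree obtained by collapsing all edges outside of the orbit of `e₁`. -/
def collapse (e₁ : E) : TreeAction G (T.CollapsedVertex e₁) (MulAction.orbit G e₁) where
  src e := T.toCollapsed (T.src e.1)
  tgt e := T.toCollapsed (T.tgt e.1)
  half e := {x | Quotient.lift (fun v => v ∈ T.half e.1) (fun v w h => by
    obtain ⟨g, hg⟩ := e.2
    exact propext (hg ▸ h g)) x}
  src_smul g e := congrArg T.toCollapsed (T.src_smul g e.1)
  tgt_smul g e := congrArg T.toCollapsed (T.tgt_smul g e.1)
  half_smul g e := Quotient.ind fun v => T.half_smul g e.1 v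
  src_mem e := T.src_mem e.1
  tgt_notMem e := T.tgt_notMem e.1
  cross e f hne := T.cross e.1 f.1 fun h => hne (Subtype.ext h)
  conn P h := Quotient.ind fun u => Quotient.ind fun v => by
    refine T.conn (fun v => P (T.toCollapsed v)) (fun e => ?_) u v
    by_cases he : e ∈ MulAction.orbit G e₁
    · exact h ⟨e, he⟩
    · rw [T.toCollapsed_src_eq he]

end Collapse

variable {T}

/-- `c` intertwines the action on the tree with the action of `G` on itself in which `g` acts by
`x ↦ θ g * x * g⁻¹`. -/
def TwistEquivariant (θ : G →* G) (c : V → G) : Prop := ∀ (g : G) v, c (g • v) = θ g * c v * g⁻¹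

theorem exists_mulEquiv_twistEquivariant [Nonempty V] (T : TreeAction G V E)
    [∀ e : E, Finite (MulAction.stabilizer G e)] (hco : CoHopfian G) {e₁ : E} {m : E → G}
    (hm : IsConjEquivariant m) (h1 : ∀ e ∉ MulAction.orbit G e₁, m e = 1) :
    ∃ (α : G ≃* G) (a : V → G), T.IsPotential m a ∧ TwistEquivariant α.toMonoidHom a := by
  obtain ⟨r⟩ := ‹Nonempty V›
  have (e : MulAction.orbit G e₁) : Finite (MulAction.stabilizer G e) := by
    have heq : MulAction.stabilizer G e = MulAction.stabilizer G e.1 := by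
      ext g
      simp [Subtype.ext_iff]
    rw [heq]
    infer_instance
  obtain ⟨a, -, ha⟩ := (T.collapse e₁).exists_isPotential (fun e => m e.1) (T.toCollapsed r)
  have ha' : T.IsPotential m (fun v => a (T.toCollapsed v)) := fun e => by
    by_cases he : e ∈ MulAction.orbit G e₁
    · exact ha ⟨e, he⟩
    · change a (T.toCollapsed (T.tgt e)) = a (T.toCollapsed (T.src e)) * m e
      rw [← T.toCollapsed_src_eq he, h1 e he, mul_one]
  have hinj : Function.Injective (twist ha' hm r) :=
    twist_injective_of_isPretransitive hco ha (fun g e => hm g e.1) (T.toCollapsed r)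
  exact ⟨MulEquiv.ofBijective _ ⟨hinj, hco _ hinj⟩, _, ha', ha'.smul_eq hm r⟩

namespace TwistEquivariant

variable {θ : G →* G} {c : V → G}

theorem bijective_of_const [Nonempty V] (hc : TwistEquivariant θ c)
    (h : ∀ e, c (T.src e) = c (T.tgt e)) : Function.Bijective θ := by
  obtain ⟨r⟩ := ‹Nonempty V›
  have hθ : (θ : G → G) = MulAut.conj (c r) := funext fun k => by
    calc θ k = θ k * c r * k⁻¹ * k * (c r)⁻¹ := by group
      _ = c r * k * (c r)⁻¹ := by rw [← hc, T.eq_of_forall_src_eq_tgt c h (k • r) r]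
  rw [hθ]
  exact (MulAut.conj (c r)).bijective

theorem inv_mul_smul (hc : TwistEquivariant θ c) (g : G) (u v : V) :
    (c (g • u))⁻¹ * c (g • v) = g * ((c u)⁻¹ * c v) * g⁻¹ := by
  rw [hc, hc]
  group

/-- Composing `θ` with an automorphism, one can make `c` constant along the orbit of `e₁`. -/
theorem exists_comp_eq [Nonempty V] [∀ e : E, Finite (MulAction.stabilizer G e)]
    (hco : CoHopfian G) (hc : TwistEquivariant θ c) (T : TreeAction G V E) (e₁ : E) :
    ∃ (α : G ≃* G) (θ' : G →* G) (c' : V → G), θ = α.toMonoidHom.comp θ' ∧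
      TwistEquivariant θ' c' ∧
      ∀ e, c' (T.src e) ≠ c' (T.tgt e) →
        c (T.src e) ≠ c (T.tgt e) ∧ e ∉ MulAction.orbit G e₁ := by
  classical
  let m : E → G := fun e =>
    if e ∈ MulAction.orbit G e₁ then (c (T.src e))⁻¹ * c (T.tgt e) else 1
  have hm : IsConjEquivariant m := fun g e => by
    have horbit : g • e ∈ MulAction.orbit G e₁ ↔ e ∈ MulAction.orbit G e₁ := by
      rw [← MulAction.orbit_eq_iff, MulAction.orbit_smul, MulAction.orbit_eq_iff]
    simp only [m, horbit]
    split_ifs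
    · rw [T.src_smul, T.tgt_smul, hc.inv_mul_smul]
    · rw [mul_one, mul_inv_cancel]
  obtain ⟨α, a, ha, hαa⟩ :=
    T.exists_mulEquiv_twistEquivariant hco hm (e₁ := e₁) fun e he => if_neg he
  refine ⟨α, α.symm.toMonoidHom.comp θ, fun v => α.symm (c v * (a v)⁻¹),
    MonoidHom.ext fun g => (α.apply_symm_apply (θ g)).symm, fun g v => ?_, fun e he => ?_⟩
  · have : c (g • v) * (a (g • v))⁻¹ = θ g * (c v * (a v)⁻¹) * α g⁻¹ := by
      rw [hc, hαa, map_inv]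
      simp [mul_assoc]
    change α.symm (c (g • v) * (a (g • v))⁻¹) = α.symm (θ g) * α.symm (c v * (a v)⁻¹) * g⁻¹
    rw [this, map_mul, map_mul, α.symm_apply_apply]
  · have hne : e ∉ MulAction.orbit G e₁ := fun h => he (congrArg α.symm (by
      rw [ha, show m e = (c (T.src e))⁻¹ * c (T.tgt e) from if_pos h]
      group))
    refine ⟨fun heq => he (congrArg α.symm ?_), hne⟩
    rw [ha, show m e = 1 from if_neg hne, mul_one, heq]

theorem bijective [Nonempty V] [∀ e : E, Finite (MulAction.stabilizer G e)]
    (hco : CoHopfian G) (T : TreeAction G V E) {A : Set E} (hA : A.Finite)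
    (hc : TwistEquivariant θ c)
    (hcA : ∀ e, c (T.src e) ≠ c (T.tgt e) → ∃ e₀ ∈ A, e ∈ MulAction.orbit G e₀) :
    Function.Bijective θ := by
  induction A, hA using Set.Finite.induction_on generalizing θ c with
  | empty => exact hc.bijective_of_const fun e => by_contra fun he => by simpa using hcA e he
  | @insert e₁ A _ _ ih =>
    obtain ⟨α, θ', c', rfl, hc', hcross⟩ := hc.exists_comp_eq hco T e₁
    refine α.bijective.comp (ih hc' fun e he => ?_)
    obtain ⟨hne, he₁⟩ := hcross e he
    obtain ⟨e₀, rfl | h₀, he₀⟩ := hcA e hne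
    exacts [absurd he₀ he₁, ⟨e₀, h₀, he₀⟩]

end TwistEquivariant

theorem exists_twistEquivariant_of_homEquiv [∀ v : V, Finite (MulAction.stabilizer G v)]
    {θ : G →* G} (hθ : HomEquiv θ (MonoidHom.id G)) : ∃ c : V → G, TwistEquivariant θ c := by
  have hlocal (v : V) : ∃ g : G, ∀ h ∈ MulAction.stabilizer G v, θ h * g = g * h := by
    obtain ⟨g, hg⟩ := hθ (MulAction.stabilizer G v) (Set.toFinite _)
    refine ⟨g⁻¹, fun h hh => ?_⟩
    rw [eq_inv_mul_iff_mul_eq, ← mul_assoc]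
    exact (hg h hh).symm
  choose conj hconj using hlocal
  let rep : V → V := fun v => Quotient.out (Quotient.mk (MulAction.orbitRel G V) v)
  have hrep (v : V) : ∃ k : G, k • rep v = v :=
    Quotient.exact (Quotient.out_eq (Quotient.mk (MulAction.orbitRel G V) v)).symm
  have rep_smul (k : G) (v : V) : rep (k • v) = rep v :=
    congrArg Quotient.out (Quotient.sound ⟨k, rfl⟩)
  choose k hk using hrep
  refine ⟨fun v => θ (k v) * conj (rep v) * (k v)⁻¹, fun x v => ?_⟩
  have hstab : (k v)⁻¹ * x⁻¹ * k (x • v) ∈ MulAction.stabilizer G (rep v) := by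
    rw [MulAction.mem_stabilizer_iff, mul_smul, mul_smul, ← rep_smul x v, hk, inv_smul_smul,
      inv_smul_eq_iff, rep_smul, hk]
  have hk' : k (x • v) = x * k v * ((k v)⁻¹ * x⁻¹ * k (x • v)) := by group
  change θ (k (x • v)) * conj (rep (x • v)) * (k (x • v))⁻¹
    = θ x * (θ (k v) * conj (rep v) * (k v)⁻¹) * x⁻¹
  rw [rep_smul, hk', map_mul, map_mul, mul_assoc _ (θ _) (conj _), hconj _ _ hstab]
  group

theorem rigid [Nonempty V] (T : TreeAction G V E) (hco : CoHopfian G)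
    [∀ v : V, Finite (MulAction.stabilizer G v)] {A : Set E} (hA : A.Finite)
    (hAE : ∀ e : E, ∃ e₀ ∈ A, e ∈ MulAction.orbit G e₀) : Rigid G := fun θ hθ => by
  have (e : E) : Finite (MulAction.stabilizer G e) := by
    have hle : MulAction.stabilizer G e ≤ MulAction.stabilizer G (T.src e) := fun g hg => by
      rw [MulAction.mem_stabilizer_iff, ← T.src_smul, MulAction.mem_stabilizer_iff.1 hg]
    exact Finite.of_injective _ (Subgroup.inclusion_injective hle)
  obtain ⟨c, hc⟩ := exists_twistEquivariant_of_homEquiv (V := V) hθ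
  exact hc.bijective hco T hA fun e _ => hAE e

theorem finiteSubgroupsConjBounded [Nonempty V] (T : TreeAction G V E)
    [∀ v : V, Finite (MulAction.stabilizer G v)] {A : Set V} (hA : A.Finite)
    (hAV : ∀ v : V, ∃ v₀ ∈ A, v ∈ MulAction.orbit G v₀) : FiniteSubgroupsConjBounded G := by
  refine ⟨⋃ v ∈ A, (MulAction.stabilizer G v : Set G),
    hA.biUnion fun v _ => Set.toFinite _, fun H hH => ?_⟩
  have : Finite H := hH
  obtain ⟨v, hv⟩ := T.exists_smul_eq_of_finite H
  obtain ⟨v₀, h₀, g, rfl⟩ := hAV v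
  refine ⟨g⁻¹, fun h hh => Set.mem_biUnion h₀ ?_⟩
  rw [SetLike.mem_coe, MulAction.mem_stabilizer_iff, inv_inv, mul_smul, mul_smul,
    inv_smul_eq_iff]
  exact hv h hh

end TreeAction

/-! ### The tree of a nested family of cuts -/

section NestedFamily

open scoped Pointwise

/-- A family of cuts (bipartitions `C, Cᶜ`) of a `G`-set that is invariant, closed under
complements and nested, together with the finiteness conditions under which it is the set of
oriented edges of a tree on which `G` acts with finite stabilizers and finite quotient. -/
structure NestedFamily (G α : Type*) [Group G] [MulAction G α] where
  cuts : Set (Set α)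
  smul_mem : ∀ (g : G), ∀ C ∈ cuts, g • C ∈ cuts
  compl_mem : ∀ C ∈ cuts, Cᶜ ∈ cuts
  nested : ∀ C ∈ cuts, ∀ D ∈ cuts, C ⊆ D ∨ C ⊆ Dᶜ ∨ Cᶜ ⊆ D ∨ D ⊆ C
  nonempty_of_mem : ∀ C ∈ cuts, C.Nonempty
  finite_separating : ∀ x y : α, {C ∈ cuts | x ∈ C ∧ y ∉ C}.Finite
  exists_finite_reps : ∃ A : Set (Set α), A.Finite ∧ A ⊆ cuts ∧
    ∀ C ∈ cuts, ∃ D ∈ A, C ∈ MulAction.orbit G D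
  exists_smul_ssubset : ∀ K : Subgroup G, Infinite K → ∃ g ∈ K, ∃ C ∈ cuts, g • C ⊂ C

namespace NestedFamily

variable {G α : Type*} [Group G] [MulAction G α] (F : NestedFamily G α)

/-- The midpoint of the edge `{U, Uᶜ}`. A vertex is encoded by the set of cuts pointing away from
it; inserting midpoints avoids inversions. -/
def midpoint (U : Set α) : Set (Set α) := {W ∈ F.cuts | U ⊂ W ∨ Uᶜ ⊂ W}

/-- The vertex from which the oriented edge `U` starts. -/
def startpoint (U : Set α) : Set (Set α) := insert U (F.midpoint U)

theorem smul_mem_iff {g : G} {C : Set α} : g • C ∈ F.cuts ↔ C ∈ F.cuts :=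
  ⟨fun h => by simpa using F.smul_mem g⁻¹ _ h, F.smul_mem g C⟩

theorem midpoint_compl (U : Set α) : F.midpoint Uᶜ = F.midpoint U := by
  simp only [midpoint, _root_.compl_compl, or_comm (a := Uᶜ ⊂ _)]

theorem midpoint_smul (g : G) (U : Set α) : F.midpoint (g • U) = g • F.midpoint U := by
  have hss (A B : Set α) : g • A ⊂ g • B ↔ A ⊂ B := by
    simp only [ssubset_iff_subset_not_subset, Set.smul_set_subset_smul_set_iff]
  ext W
  obtain ⟨W, rfl⟩ := MulAction.surjective g W
  rw [Set.smul_mem_smul_set_iff]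
  simp only [midpoint, Set.mem_ofPred_eq, F.smul_mem_iff, ← Set.smul_set_compl, hss]

theorem startpoint_smul (g : G) (U : Set α) : F.startpoint (g • U) = g • F.startpoint U := by
  rw [startpoint, startpoint, Set.smul_set_insert, midpoint_smul]

variable {F}

theorem not_compl_ssubset_of_subset {U W : Set α} (hW : W ∈ F.cuts) (h : U ⊆ W) : ¬ Wᶜ ⊂ U :=
  fun h' => by
    obtain ⟨x, hx⟩ := F.nonempty_of_mem _ (F.compl_mem W hW)
    exact hx (h (h'.1 hx))

theorem notMem_midpoint {U : Set α} (hU : U ∈ F.cuts) : U ∉ F.midpoint U := by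
  rintro ⟨-, h | h⟩
  exacts [h.ne rfl, not_compl_ssubset_of_subset hU subset_rfl h]

theorem startpoint_compl_subset {U W : Set α} (hU : U ∈ F.cuts) (hW : W ∈ F.cuts) (h : U ⊂ W)
    (hcov : ∀ X ∈ F.cuts, U ⊂ X → ¬ X ⊂ W) : F.startpoint Uᶜ ⊆ F.startpoint W := by
  rintro X (rfl | hX)
  · exact Or.inr ⟨F.compl_mem U hU, Or.inr (compl_lt_compl_iff_lt.2 h)⟩
  rw [midpoint_compl] at hX
  obtain ⟨hX, hUX | hUX⟩ := hX
  · obtain ⟨x, hx⟩ := F.nonempty_of_mem U hU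
    rcases F.nested X hX W hW with hXW | hXW | hXW | hXW
    · rcases eq_or_ssubset_of_subset hXW with rfl | hXW
      exacts [Or.inl rfl, absurd hXW (hcov X hX hUX)]
    · exact absurd (h.1 hx) (hXW (hUX.1 hx))
    · have hne : Wᶜ ≠ X := fun he => absurd (h.1 hx) (he ▸ hUX.1 hx : x ∈ Wᶜ)
      exact Or.inr ⟨hX, Or.inr ((Set.compl_subset_comm.1 hXW).ssubset_of_ne hne)⟩
    · rcases eq_or_ssubset_of_subset hXW with rfl | hXW
      exacts [Or.inl rfl, Or.inr ⟨hX, Or.inl hXW⟩]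
  · exact Or.inr ⟨hX, Or.inr ((compl_lt_compl_iff_lt.2 h).trans hUX)⟩

theorem startpoint_compl_eq {U W : F.cuts} (h : U ⋖ W) :
    F.startpoint (U.1ᶜ) = F.startpoint W.1 := by
  refine subset_antisymm
    (startpoint_compl_subset U.2 W.2 h.1 fun X hX hUX hXW => h.2 (c := ⟨X, hX⟩) hUX hXW) ?_
  have := startpoint_compl_subset (F.compl_mem _ W.2) (F.compl_mem _ U.2)
    (compl_lt_compl_iff_lt.2 h.1) fun X hX hWX hXU => by
      obtain ⟨Y, rfl⟩ := compl_surjective X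
      exact h.2 (c := ⟨Y, by simpa using F.compl_mem _ hX⟩) (compl_lt_compl_iff_lt.1 hXU)
        (compl_lt_compl_iff_lt.1 hWX)
  rwa [_root_.compl_compl] at this

variable (F)

/-- The vertices of the tree of a nested family. -/
def Vertex : Type _ := {v : Set (Set α) // ∃ U ∈ F.cuts, v = F.startpoint U ∨ v = F.midpoint U}

/-- The source of the edge `U` of the tree. -/
def src (U : F.cuts) : F.Vertex := ⟨F.startpoint U, U, U.2, Or.inl rfl⟩

/-- The target of the edge `U` of the tree. -/
def tgt (U : F.cuts) : F.Vertex := ⟨F.midpoint U, U, U.2, Or.inr rfl⟩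

theorem exists_eq_src_or_eq_tgt (v : F.Vertex) : ∃ U : F.cuts, v = F.src U ∨ v = F.tgt U := by
  obtain ⟨v, U, hU, rfl | rfl⟩ := v
  exacts [⟨⟨U, hU⟩, Or.inl rfl⟩, ⟨⟨U, hU⟩, Or.inr rfl⟩]

instance : MulAction G F.cuts where
  smul g U := ⟨g • U.1, F.smul_mem g U.1 U.2⟩
  one_smul U := Subtype.ext (one_smul G U.1)
  mul_smul g h U := Subtype.ext (mul_smul g h U.1)

instance : MulAction G F.Vertex where
  smul g v := ⟨g • v.1, by
    obtain ⟨v, U, hU, rfl | rfl⟩ := v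
    exacts [⟨g • U, F.smul_mem g U hU, Or.inl (F.startpoint_smul g U).symm⟩,
      ⟨g • U, F.smul_mem g U hU, Or.inr (F.midpoint_smul g U).symm⟩]⟩
  one_smul v := Subtype.ext (one_smul G v.1)
  mul_smul g h v := Subtype.ext (mul_smul g h v.1)

theorem src_smul (g : G) (U : F.cuts) : F.src (g • U) = g • F.src U :=
  Subtype.ext (F.startpoint_smul g U.1)

theorem tgt_smul (g : G) (U : F.cuts) : F.tgt (g • U) = g • F.tgt U :=
  Subtype.ext (F.midpoint_smul g U.1)

theorem tgt_compl (U : F.cuts) : F.tgt ⟨U.1ᶜ, F.compl_mem _ U.2⟩ = F.tgt U :=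
  Subtype.ext (F.midpoint_compl U.1)

theorem tgt_iff_tgt {P : F.Vertex → Prop} (h : ∀ U, P (F.src U) ↔ P (F.tgt U))
    (U W : F.cuts) : P (F.tgt U) ↔ P (F.tgt W) := by
  have : LocallyFiniteOrder F.cuts := LocallyFiniteOrder.ofFiniteIcc fun U W => by
    obtain ⟨x, hx⟩ := F.nonempty_of_mem _ U.2
    obtain ⟨y, hy⟩ := F.nonempty_of_mem _ (F.compl_mem _ W.2)
    exact Set.Finite.of_finite_image ((F.finite_separating x y).subset
      (Set.image_subset_iff.2 fun X hX => ⟨X.2, hX.1 hx, fun hyX => hy (hX.2 hyX)⟩))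
      Subtype.val_injective.injOn
  have of_covBy {U W : F.cuts} (hUW : U ⋖ W) : P (F.tgt U) ↔ P (F.tgt W) := by
    rw [← tgt_compl, ← h, ← h W]
    exact iff_of_eq (congrArg P (Subtype.ext (startpoint_compl_eq hUW)))
  have of_le {U W : F.cuts} (hUW : U ≤ W) : P (F.tgt U) ↔ P (F.tgt W) := by
    rw [le_iff_reflTransGen_covBy] at hUW
    induction hUW with
    | refl => rfl
    | tail _ hcov ih => exact ih.trans (of_covBy hcov)
  rcases F.nested _ U.2 _ W.2 with hUW | hUW | hUW | hUW
  · exact of_le hUW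
  · rw [← F.tgt_compl W]
    exact of_le hUW
  · rw [← F.tgt_compl U]
    exact of_le hUW
  · exact (of_le hUW).symm

/-- The tree of a nested family. -/
def tree : TreeAction G F.Vertex F.cuts where
  src := F.src
  tgt := F.tgt
  half U := {v | U.1 ∈ v.1}
  src_smul := F.src_smul
  tgt_smul := F.tgt_smul
  half_smul _ _ _ := Set.smul_mem_smul_set_iff
  src_mem _ := Set.mem_insert _ _
  tgt_notMem U := notMem_midpoint U.2
  cross U W hne := ⟨fun h => h.resolve_left fun heq => hne (Subtype.ext heq.symm), Or.inr⟩
  conn P h u v hu := by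
    obtain ⟨U, hU⟩ := F.exists_eq_src_or_eq_tgt u
    obtain ⟨W, hW⟩ := F.exists_eq_src_or_eq_tgt v
    have hUW := F.tgt_iff_tgt h U W
    rcases hU with rfl | rfl <;> rcases hW with rfl | rfl <;> simpa only [h, hUW] using hu

theorem half_ssubset_half {U W : F.cuts} (h : U.1 ⊂ W.1) : F.tree.half U ⊂ F.tree.half W := by
  have hsub : F.tree.half U ⊆ F.tree.half W := by
    have hmid {X : Set α} (hX : U.1 ∈ F.midpoint X) : W.1 ∈ F.midpoint X :=
      ⟨W.2, hX.2.imp (·.trans h) (·.trans h)⟩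
    rintro ⟨v, X, hX, rfl | rfl⟩ hv
    · obtain heq | hv : U.1 = X ∨ U.1 ∈ F.midpoint X := hv
      exacts [Or.inr ⟨W.2, Or.inl (heq ▸ h)⟩, Or.inr (hmid hv)]
    · exact hmid hv
  refine ⟨hsub, fun hsup => ?_⟩
  rcases hsup (F.tree.src_mem W) with heq | ⟨-, hss | hss⟩
  · exact h.ne heq
  · exact (h.trans hss).ne rfl
  · exact not_compl_ssubset_of_subset W.2 h.1 hss

instance finite_stabilizer (v : F.Vertex) : Finite (MulAction.stabilizer G v) := by
  by_contra hinf
  obtain ⟨g, hg, C, hC, hgC⟩ := F.exists_smul_ssubset _ (not_finite_iff_infinite.1 hinf)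
  refine F.tree.not_far_smul_ssubset_of_smul_eq hg ⟨⟨C, hC⟩, false⟩ ?_
  exact F.half_ssubset_half (U := g • ⟨C, hC⟩) (W := ⟨C, hC⟩) hgC

theorem exists_finite_edge_reps :
    ∃ A : Set F.cuts, A.Finite ∧ ∀ U, ∃ U₀ ∈ A, U ∈ MulAction.orbit G U₀ := by
  obtain ⟨A, hA, hAF, horb⟩ := F.exists_finite_reps
  refine ⟨Subtype.val ⁻¹' A, hA.preimage Subtype.val_injective.injOn, fun U => ?_⟩
  obtain ⟨D, hD, g, hg⟩ := horb U U.2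
  exact ⟨⟨D, hAF hD⟩, hD, g, Subtype.ext hg⟩

variable {F}

theorem nonempty_vertex (hF : F.cuts.Nonempty) : Nonempty F.Vertex :=
  hF.elim fun U hU => ⟨F.src ⟨U, hU⟩⟩

theorem rigid (hF : F.cuts.Nonempty) (hco : CoHopfian G) : Rigid G := by
  have := nonempty_vertex hF
  obtain ⟨A, hA, hAF⟩ := F.exists_finite_edge_reps
  exact F.tree.rigid hco hA hAF

theorem finiteSubgroupsConjBounded (hF : F.cuts.Nonempty) : FiniteSubgroupsConjBounded G := by
  have := nonempty_vertex hF
  obtain ⟨A, hA, hAF⟩ := F.exists_finite_edge_reps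
  refine F.tree.finiteSubgroupsConjBounded ((hA.image F.src).union (hA.image F.tgt)) fun v => ?_
  obtain ⟨U, hv⟩ := F.exists_eq_src_or_eq_tgt v
  obtain ⟨U₀, hU₀, g, rfl⟩ := hAF U
  rcases hv with rfl | rfl
  · exact ⟨F.src U₀, Or.inl ⟨U₀, hU₀, rfl⟩, g, (F.src_smul g U₀).symm⟩
  · exact ⟨F.tgt U₀, Or.inr ⟨U₀, hU₀, rfl⟩, g, (F.tgt_smul g U₀).symm⟩

end NestedFamily

end NestedFamily

/-! ### Presentations of group extensions -/

section FinitePresentation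

theorem finite_of_fg_freeGroup {α : Type*} [Group.FG (FreeGroup α)] : Finite α := by
  let M := Multiplicative (ZMod 2)
  obtain ⟨S, hS, hfin⟩ := Group.fg_iff.1 ‹Group.FG (FreeGroup α)›
  have : Finite S := hfin
  have restrict_injective : Function.Injective fun (φ : FreeGroup α →* M) (s : S) => φ s :=
    fun φ ψ h => MonoidHom.eq_of_eqOn_dense hS fun s hs => congrFun h ⟨s, hs⟩
  have := Finite.of_injective _ restrict_injective
  classical
  have mulSingle_injective :
      Function.Injective fun a : α => Pi.mulSingle (M := fun _ => M) a (Multiplicative.ofAdd 1) :=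
    fun a b h => by
      by_contra hab
      have hone : Multiplicative.ofAdd (1 : ZMod 2) = 1 := by
        simpa only [Pi.mulSingle_eq_same, Pi.mulSingle_eq_of_ne hab] using congrFun h a
      exact one_ne_zero (ofAdd_eq_one.1 hone)
  exact Finite.of_injective _ (FreeGroup.lift.injective.comp mulSingle_injective)

variable {G : Type*} [Group G]

theorem VirtuallyFree.exists_normal_basis (hfg : Group.FG G) (hvf : VirtuallyFree G) :
    ∃ K : Subgroup G, K.Normal ∧ K.FiniteIndex ∧ ∃ n, Nonempty (FreeGroupBasis (Fin n) K) := by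
  obtain ⟨H, hH, ⟨hfree⟩⟩ := hvf
  have : IsFreeGroup H.normalCore :=
    IsFreeGroup.ofMulEquiv (Subgroup.subgroupOfEquivOfLe H.normalCore_le)
  let b := IsFreeGroup.basis H.normalCore
  have : Group.FG (FreeGroup (IsFreeGroup.Generators H.normalCore)) :=
    Group.fg_of_surjective (f := b.repr.toMonoidHom) b.repr.surjective
  have := finite_of_fg_freeGroup (α := IsFreeGroup.Generators H.normalCore)
  obtain ⟨n, ⟨e⟩⟩ := Finite.exists_equiv_fin (IsFreeGroup.Generators H.normalCore)
  exact ⟨H.normalCore, inferInstance, inferInstance, n, ⟨b.reindex e⟩⟩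

namespace ExtensionPresentation

variable {K : Subgroup G} [K.Normal]

/-- The factor set of the extension `K → G → G ⧸ K` with respect to the section
`Quotient.out`. -/
noncomputable def factorSet (q q' : G ⧸ K) : K :=
  ⟨q.out * q'.out * (q * q').out⁻¹, by simp [← QuotientGroup.eq_one_iff]⟩

/-- The component in `K` of `g`, written as an element of `K` times a coset representative. -/
noncomputable def kernelPart (K : Subgroup G) [K.Normal] (g : G) : K :=
  ⟨g * (g : G ⧸ K).out⁻¹, by simp [← QuotientGroup.eq_one_iff]⟩

@[simp] theorem kernelPart_mul_out (g : G) : (kernelPart K g : G) * (g : G ⧸ K).out = g := by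
  simp [kernelPart]

theorem kernelPart_mul (g g' : G) :
    kernelPart K (g * g') =
      kernelPart K g * MulAut.conjNormal (g : G ⧸ K).out (kernelPart K g') *
        factorSet (g : G ⧸ K) (g' : G ⧸ K) := by
  apply Subtype.ext
  simp only [kernelPart, factorSet, Subgroup.coe_mul, MulAut.conjNormal_apply,
    QuotientGroup.mk_mul]
  group

variable {M : Type*} [Group M] {ι : K →* M} {τ : G ⧸ K → M}

theorem exists_hom (hconj : ∀ q k, τ q * ι k = ι (MulAut.conjNormal q.out k) * τ q)
    (hmul : ∀ q q', τ q * τ q' = ι (factorSet q q') * τ (q * q')) :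
    ∃ φ : G →* M, (∀ k : K, φ k = ι k) ∧ ∀ q : G ⧸ K, φ q.out = τ q := by
  let φ : G →* M := MonoidHom.mk' (fun g => ι (kernelPart K g) * τ g) fun g g' => by
    simp only [kernelPart_mul, QuotientGroup.mk_mul, map_mul, mul_assoc, ← hmul]
    rw [← mul_assoc (τ g), hconj, mul_assoc]
  refine ⟨φ, fun k => ?_, fun q => ?_⟩
  · have hk : ((k : G) : G ⧸ K) = 1 := (QuotientGroup.eq_one_iff _).2 k.2
    have hτ : τ 1 = ι (factorSet 1 1) := by simpa using hmul 1 1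
    change ι (kernelPart K k) * τ k = ι k
    rw [hk, hτ, ← map_mul]
    congr 1
    apply Subtype.ext
    simp [kernelPart, factorSet, hk]
  · have hq : kernelPart K q.out = 1 := Subtype.ext (by simp [kernelPart])
    change ι (kernelPart K q.out) * τ (q.out : G) = τ q
    rw [hq, map_one, one_mul, QuotientGroup.out_eq']

open Monoid.Coprod

/-- Relators presenting `G` as a quotient of the free product of `K` and the free group on
`G ⧸ K`, where `S` generates `K`. -/
def relators (S : Set K) : Set (Monoid.Coprod K (FreeGroup (G ⧸ K))) :=
  Set.range (fun p : (G ⧸ K) × S => inr (.of p.1) * inl p.2.1 *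
    (inl (MulAut.conjNormal p.1.out p.2.1) * inr (.of p.1))⁻¹) ∪
  Set.range fun p : (G ⧸ K) × (G ⧸ K) => inr (.of p.1) * inr (.of p.2) *
    (inl (factorSet p.1 p.2) * inr (.of (p.1 * p.2)))⁻¹

theorem finite_relators [K.FiniteIndex] {S : Set K} (hS : S.Finite) : (relators S).Finite := by
  have : Finite S := hS
  exact (Set.finite_range _).union (Set.finite_range _)

variable (K) in
/-- The evaluation map of the presentation. -/
noncomputable def eval : Monoid.Coprod K (FreeGroup (G ⧸ K)) →* G :=
  lift K.subtype (FreeGroup.lift Quotient.out)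

theorem eval_surjective : Function.Surjective (eval K) := fun g =>
  ⟨inl (kernelPart K g) * inr (.of g), by simp [eval]⟩

theorem conj_of_closure {S : Set K} (hS : Subgroup.closure S = ⊤) (q : G ⧸ K)
    (h : ∀ s ∈ S, τ q * ι s = ι (MulAut.conjNormal q.out s) * τ q) (k : K) :
    τ q * ι k = ι (MulAut.conjNormal q.out k) * τ q := by
  have heq : (MulAut.conj (τ q)).toMonoidHom.comp ι =
      ι.comp (MulAut.conjNormal q.out).toMonoidHom :=
    MonoidHom.eq_of_eqOn_dense hS fun s hs => mul_inv_eq_of_eq_mul (h s hs)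
  exact mul_inv_eq_iff_eq_mul.1 (DFunLike.congr_fun heq k)

theorem ker_eval {S : Set K} (hS : Subgroup.closure S = ⊤) :
    (eval K).ker = Subgroup.normalClosure (relators S) := by
  let π := QuotientGroup.mk' (Subgroup.normalClosure (relators S))
  have hπ {r} (hr : r ∈ relators S) : π r = 1 :=
    (QuotientGroup.eq_one_iff r).2 (Subgroup.subset_normalClosure hr)
  refine le_antisymm (fun w hw => ?_) (Subgroup.normalClosure_le_normal ?_)
  · let ι := π.comp inl
    let τ (q : G ⧸ K) := π (inr (.of q))
    have hconj (q) : ∀ s ∈ S, τ q * ι s = ι (MulAut.conjNormal q.out s) * τ q := fun s hs => by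
      simpa only [map_mul, map_inv, mul_inv_eq_one, ι, τ, MonoidHom.comp_apply]
        using hπ (Or.inl ⟨(q, ⟨s, hs⟩), rfl⟩)
    have hmul (q q') : τ q * τ q' = ι (factorSet q q') * τ (q * q') := by
      simpa only [map_mul, map_inv, mul_inv_eq_one, ι, τ, MonoidHom.comp_apply]
        using hπ (Or.inr ⟨(q, q'), rfl⟩)
    obtain ⟨φ, hφK, hφout⟩ := exists_hom (fun q => conj_of_closure hS q (hconj q)) hmul
    have hφ : φ.comp (eval K) = π := by
      refine hom_ext (MonoidHom.ext fun k => ?_) (FreeGroup.ext_hom _ _ fun q => ?_)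
      · simpa [eval, ι] using hφK k
      · simpa [eval, τ] using hφout q
    rw [← QuotientGroup.ker_mk' (Subgroup.normalClosure _), MonoidHom.mem_ker]
    change π w = 1
    rw [← hφ, MonoidHom.comp_apply, MonoidHom.mem_ker.1 hw, map_one]
  · rintro _ (⟨⟨q, s⟩, rfl⟩ | ⟨⟨q, q'⟩, rfl⟩)
    · simp [eval]
    · simp [eval, factorSet]

end ExtensionPresentation

open ExtensionPresentation in
theorem isFinitelyPresented_of_normal_finiteIndex (K : Subgroup G) [K.Normal] [K.FiniteIndex]
    [Group.IsFinitelyPresented K] : Group.IsFinitelyPresented G := by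
  obtain ⟨n, φ, hφ, -⟩ := ‹Group.IsFinitelyPresented K›.out
  obtain ⟨S, hS, hfin⟩ := Group.fg_iff.1 (Group.fg_of_surjective hφ)
  exact Group.IsFinitelyPresented.of_surjective (eval K) eval_surjective
    ⟨relators S, finite_relators hfin, (ker_eval hS).symm⟩

theorem isFinitelyPresented_of_basis (K : Subgroup G) [K.Normal] [K.FiniteIndex] {ι : Type*}
    [Finite ι] (b : FreeGroupBasis ι K) : Group.IsFinitelyPresented G :=
  have : Group.IsFinitelyPresented K := .equiv b.repr.symm
  isFinitelyPresented_of_normal_finiteIndex K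

theorem exists_hom_of_relators {F H : Type*} [Group F] [Group H] {φ : F →* G}
    (hφ : Function.Surjective φ) {R : Set F} (hR : Subgroup.normalClosure R = φ.ker)
    (ψ : F →* H) (h : ∀ r ∈ R, ψ r = 1) : ∃ θ : G →* H, ∀ w, θ (φ w) = ψ w := by
  have hker : φ.ker ≤ ψ.ker := hR ▸ Subgroup.normalClosure_le_normal h
  exact ⟨φ.liftOfSurjective hφ ⟨ψ, hker⟩, MonoidHom.liftOfRightInverse_comp_apply _ _ _ ⟨ψ, hker⟩⟩

end FinitePresentation

/-! ### Almost invariant sets and ends -/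

section AlmostInvariant

open Filter
open scoped Pointwise symmDiff

/-- Two sets cross if all four of their corners are nonempty. -/
def Crossing {α : Type*} (C D : Set α) : Prop := ¬(C ⊆ D ∨ C ⊆ Dᶜ ∨ Cᶜ ⊆ D ∨ D ⊆ C)

namespace Crossing

variable {α : Type*} {C D : Set α}

theorem symm (h : Crossing C D) : Crossing D C := by
  rw [Crossing, Set.subset_compl_comm, Set.compl_subset_comm]
  exact fun h' => h (by tauto)

theorem compl_right (h : Crossing C D) : Crossing C Dᶜ := by
  rw [Crossing, _root_.compl_compl, Set.compl_subset_compl, Set.compl_subset_comm]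
  exact fun h' => h (by tauto)

theorem compl_left (h : Crossing C D) : Crossing Cᶜ D := h.symm.compl_right.symm

end Crossing

variable {G : Type*} [Group G]

/-- The coboundary of `C` in direction `b`: the points `x` such that the edge from `x` to `x * b`
crosses from `C` to its complement or back. -/
def rightBoundary (b : G) (C : Set G) : Set G := {x | ¬(x ∈ C ↔ x * b ∈ C)}

theorem mem_rightBoundary {b x : G} {C : Set G} :
    x ∈ rightBoundary b C ↔ ¬(x ∈ C ↔ x * b ∈ C) := Iff.rfl

theorem rightBoundary_smul (b g : G) (C : Set G) :
    rightBoundary b (g • C) = g • rightBoundary b C := by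
  ext x
  simp only [mem_rightBoundary, Set.mem_smul_set_iff_inv_smul_mem, smul_eq_mul, mul_assoc]

theorem rightBoundary_compl (b : G) (C : Set G) : rightBoundary b Cᶜ = rightBoundary b C := by
  ext x
  simp only [mem_rightBoundary, Set.mem_compl_iff, not_iff_not]

theorem rightBoundary_symmDiff (b : G) (C D : Set G) :
    rightBoundary b (C ∆ D) = rightBoundary b C ∆ rightBoundary b D := by
  ext x
  simp only [mem_rightBoundary, Set.mem_symmDiff]
  tauto

theorem rightBoundary_one (C : Set G) : rightBoundary 1 C = ∅ := by
  simp [rightBoundary]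

theorem rightBoundary_inv (b : G) (C : Set G) :
    rightBoundary b⁻¹ C = (· * b⁻¹) ⁻¹' rightBoundary b C := by
  ext x
  simp only [Set.mem_preimage, mem_rightBoundary, inv_mul_cancel_right, iff_comm]

theorem rightBoundary_mul_subset (a b : G) (C : Set G) :
    rightBoundary (a * b) C ⊆ rightBoundary a C ∪ (· * a) ⁻¹' rightBoundary b C := by
  intro x
  simp only [Set.mem_union, Set.mem_preimage, mem_rightBoundary, mul_assoc]
  tauto

theorem rightBoundary_inter_union_inter_subset (b : G) (C D : Set G) :
    rightBoundary b (C ∩ D) ∩ rightBoundary b (C ∪ D) ⊆ rightBoundary b C ∩ rightBoundary b D := by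
  intro x
  simp only [mem_rightBoundary, Set.mem_inter_iff, Set.mem_union]
  tauto

theorem rightBoundary_inter_union_union_subset (b : G) (C D : Set G) :
    rightBoundary b (C ∩ D) ∪ rightBoundary b (C ∪ D) ⊆ rightBoundary b C ∪ rightBoundary b D := by
  intro x
  simp only [mem_rightBoundary, Set.mem_inter_iff, Set.mem_union]
  tauto

/-- A subset of a group is almost invariant if it differs from each of its right translates by a
finite set only. -/
def AlmostInvariant (C : Set G) : Prop := ∀ b : G, (rightBoundary b C).Finite

theorem almostInvariant_of_closure {S : Set G} (hS : Subgroup.closure S = ⊤) {C : Set G}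
    (h : ∀ b ∈ S, (rightBoundary b C).Finite) : AlmostInvariant C := fun b => by
  have hb : b ∈ Subgroup.closure S := hS ▸ Subgroup.mem_top b
  induction hb using Subgroup.closure_induction with
  | mem b hb => exact h b hb
  | one => rw [rightBoundary_one]; exact Set.finite_empty
  | inv b _ hb => rw [rightBoundary_inv]; exact hb.preimage (mul_left_injective _).injOn
  | mul a b _ _ ha hb =>
    exact (ha.union (hb.preimage (mul_left_injective a).injOn)).subset
      (rightBoundary_mul_subset a b C)

theorem mem_iff_mem_of_rightBoundary_eq_empty {S : Set G} (hS : Subgroup.closure S = ⊤)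
    {C : Set G} (h : ∀ b ∈ S, rightBoundary b C = ∅) (x y : G) : x ∈ C ↔ y ∈ C := by
  suffices hempty : ∀ b, rightBoundary b C = ∅ by
    have hx := Set.eq_empty_iff_forall_notMem.1 (hempty (x⁻¹ * y)) x
    rwa [mem_rightBoundary, not_not, mul_inv_cancel_left] at hx
  intro b
  have hb : b ∈ Subgroup.closure S := hS ▸ Subgroup.mem_top b
  induction hb using Subgroup.closure_induction with
  | mem b hb => exact h b hb
  | one => exact rightBoundary_one C
  | inv b _ hb => rw [rightBoundary_inv, hb, Set.preimage_empty]
  | mul a b _ _ ha hb =>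
    simpa [ha, hb] using rightBoundary_mul_subset a b C

namespace AlmostInvariant

variable {C D : Set G}

theorem smul (h : AlmostInvariant C) (g : G) : AlmostInvariant (g • C) := fun b => by
  rw [rightBoundary_smul]
  exact (h b).smul_set

theorem compl (h : AlmostInvariant C) : AlmostInvariant Cᶜ := fun b => by
  rw [rightBoundary_compl]
  exact h b

theorem symmDiff (hC : AlmostInvariant C) (hD : AlmostInvariant D) : AlmostInvariant (C ∆ D) :=
  fun b => by
    rw [rightBoundary_symmDiff]
    exact ((hC b).union (hD b)).subset Set.symmDiff_subset_union

theorem inter (hC : AlmostInvariant C) (hD : AlmostInvariant D) : AlmostInvariant (C ∩ D) :=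
  fun b => ((hC b).union (hD b)).subset
    (Set.subset_union_left.trans (rightBoundary_inter_union_union_subset b C D))

theorem union (hC : AlmostInvariant C) (hD : AlmostInvariant D) : AlmostInvariant (C ∪ D) :=
  fun b => ((hC b).union (hD b)).subset
    (Set.subset_union_right.trans (rightBoundary_inter_union_union_subset b C D))

end AlmostInvariant

/-- The number of edges in direction `b` crossing the cut `C`; junk value `0` if there are
infinitely many. -/
noncomputable def boundarySize (b : G) (C : Set G) : ℕ := (rightBoundary b C).ncard

theorem boundarySize_smul (b g : G) (C : Set G) : boundarySize b (g • C) = boundarySize b C := by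
  rw [boundarySize, boundarySize, rightBoundary_smul, Set.ncard_smul_set]

theorem boundarySize_compl (b : G) (C : Set G) : boundarySize b Cᶜ = boundarySize b C := by
  rw [boundarySize, boundarySize, rightBoundary_compl]

theorem boundarySize_inter_add_union_le {C D : Set G} (hC : AlmostInvariant C)
    (hD : AlmostInvariant D) (b : G) :
    boundarySize b (C ∩ D) + boundarySize b (C ∪ D) ≤ boundarySize b C + boundarySize b D := by
  simp only [boundarySize]
  rw [← Set.ncard_union_add_ncard_inter _ _ (hC.inter hD b) (hC.union hD b),
    ← Set.ncard_union_add_ncard_inter _ _ (hC b) (hD b)]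
  exact add_le_add
    (Set.ncard_le_ncard (rightBoundary_inter_union_union_subset b C D) ((hC b).union (hD b)))
    (Set.ncard_le_ncard (rightBoundary_inter_union_inter_subset b C D) ((hC b).inter_of_left _))

theorem boundarySize_inter_add_union_lt {C D : Set G} (hC : AlmostInvariant C)
    (hD : AlmostInvariant D) {x y : G} (hx : x ∈ C \ D) (hy : y ∈ D \ C) :
    boundarySize (x⁻¹ * y) (C ∩ D) + boundarySize (x⁻¹ * y) (C ∪ D) <
      boundarySize (x⁻¹ * y) C + boundarySize (x⁻¹ * y) D := by
  set b := x⁻¹ * y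
  have hxb : x * b = y := mul_inv_cancel_left x y
  have hssub : rightBoundary b (C ∩ D) ∩ rightBoundary b (C ∪ D) ⊂
      rightBoundary b C ∩ rightBoundary b D := by
    refine (Set.ssubset_iff_of_subset (rightBoundary_inter_union_inter_subset b C D)).2 ⟨x, ?_, ?_⟩
    all_goals
      simp only [mem_rightBoundary, Set.mem_inter_iff, Set.mem_union, hxb, hx.1, hx.2, hy.1, hy.2]
      decide
  simp only [boundarySize]
  rw [← Set.ncard_union_add_ncard_inter _ _ (hC.inter hD b) (hC.union hD b),
    ← Set.ncard_union_add_ncard_inter _ _ (hC b) (hD b)]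
  exact add_lt_add_of_le_of_lt
    (Set.ncard_le_ncard (rightBoundary_inter_union_union_subset b C D) ((hC b).union (hD b)))
    (Set.ncard_lt_ncard hssub ((hC b).inter_of_left _))

section CutSize

variable {ι : Type*} [Fintype ι]

/-- The number of edges of the Cayley graph with respect to the generators `s` that cross the
cut `C`. -/
noncomputable def cutSize (s : ι → G) (C : Set G) : ℕ := ∑ i, boundarySize (s i) C

theorem cutSize_smul (s : ι → G) (g : G) (C : Set G) : cutSize s (g • C) = cutSize s C := by
  simp only [cutSize, boundarySize_smul]

/-- The size of a cut refined lexicographically by the numbers of crossing edges in all directions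
`β k`. This makes submodularity strict for crossing cuts, so that minimal cuts are nested. -/
noncomputable def cutWeight (β : ℕ → G) (s : ι → G) (C : Set G) : Lex (ℕ → ℕ) :=
  toLex fun
    | 0 => cutSize s C
    | k + 1 => boundarySize (β k) C

variable {β : ℕ → G} {s : ι → G} {C D : Set G}

theorem cutWeight_smul (g : G) (C : Set G) : cutWeight β s (g • C) = cutWeight β s C := by
  simp only [cutWeight, cutSize, boundarySize_smul]

theorem cutWeight_compl (C : Set G) : cutWeight β s Cᶜ = cutWeight β s C := by
  simp only [cutWeight, cutSize, boundarySize_compl]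

theorem cutSize_le_of_cutWeight_le (h : cutWeight β s C ≤ cutWeight β s D) :
    cutSize s C ≤ cutSize s D := by
  rcases h.lt_or_eq with ⟨_ | i, hlt, hi⟩ | heq
  · exact hi.le
  · exact (hlt 0 i.succ_pos).le
  · exact (congrFun (congrArg ofLex heq) 0).le

theorem cutWeight_lt_of_cutSize_lt (h : cutSize s C < cutSize s D) :
    cutWeight β s C < cutWeight β s D :=
  ⟨0, fun j hj => absurd hj j.not_lt_zero, h⟩

theorem cutWeight_inter_add_union_lt (hβ : Function.Surjective β) (hC : AlmostInvariant C)
    (hD : AlmostInvariant D) (h : Crossing C D) :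
    cutWeight β s (C ∩ D) + cutWeight β s (C ∪ D) < cutWeight β s C + cutWeight β s D := by
  obtain ⟨x, hx⟩ := Set.sdiff_nonempty.2 fun hCD => h (Or.inl hCD)
  obtain ⟨y, hy⟩ := Set.sdiff_nonempty.2 fun hDC => h (Or.inr (Or.inr (Or.inr hDC)))
  obtain ⟨k, hk⟩ := hβ (x⁻¹ * y)
  refine Pi.toLex_strictMono (Pi.lt_def.2 ⟨?_, k + 1, ?_⟩)
  · rintro (_ | k)
    · change ∑ i, _ + ∑ i, _ ≤ ∑ i, _ + ∑ i, _
      simp only [← Finset.sum_add_distrib]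
      exact Finset.sum_le_sum fun i _ => boundarySize_inter_add_union_le hC hD (s i)
    · exact boundarySize_inter_add_union_le hC hD (β k)
  · change boundarySize (β k) _ + boundarySize (β k) _ < boundarySize (β k) _ + boundarySize (β k) _
    exact hk ▸ boundarySize_inter_add_union_lt hC hD hx hy

end CutSize

theorem smul_set_mem_smul_filter_iff {l : Filter G} {k : G} {C : Set G} :
    k • C ∈ k • l ↔ C ∈ l :=
  ⟨fun h => by simpa only [inv_smul_smul] using smul_set_mem_smul_filter (a := k⁻¹) h,
    smul_set_mem_smul_filter⟩

/-- A filter converging to an end of `G`, that is, one that decides all almost invariant sets. -/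
structure IsEnd (l : Filter G) : Prop where
  neBot : l.NeBot
  mem_or_compl_mem : ∀ C, AlmostInvariant C → C ∈ l ∨ Cᶜ ∈ l

namespace IsEnd

variable {l l' : Filter G} {C D : Set G}

theorem compl_mem_iff (h : IsEnd l) (hC : AlmostInvariant C) : Cᶜ ∈ l ↔ C ∉ l :=
  have := h.neBot
  ⟨fun hc hmem => compl_notMem hmem hc, (h.mem_or_compl_mem C hC).resolve_left⟩

theorem smul (h : IsEnd l) (k : G) : IsEnd (k • l) where
  neBot := have := h.neBot; inferInstance
  mem_or_compl_mem C hC := by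
    rw [← smul_inv_smul k C, ← Set.smul_set_compl, smul_set_mem_smul_filter_iff,
      smul_set_mem_smul_filter_iff]
    exact h.mem_or_compl_mem _ (hC.smul _)

theorem mem_iff_of_le (h : IsEnd l) [l'.NeBot] (hle : l' ≤ l) (hC : AlmostInvariant C) :
    C ∈ l' ↔ C ∈ l :=
  ⟨fun hmem => (h.mem_or_compl_mem C hC).resolve_right fun hc => compl_notMem hmem (hle hc),
    fun hmem => hle hmem⟩

theorem union_mem_iff (h : IsEnd l) (hC : AlmostInvariant C) (hD : AlmostInvariant D) :
    C ∪ D ∈ l ↔ C ∈ l ∨ D ∈ l := by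
  rw [← not_iff_not, ← h.compl_mem_iff (hC.union hD), Set.compl_union, inter_mem_iff,
    h.compl_mem_iff hC, h.compl_mem_iff hD, not_or]

theorem symmDiff_mem_iff (h : IsEnd l) (hC : AlmostInvariant C) (hD : AlmostInvariant D) :
    C ∆ D ∈ l ↔ ¬(C ∈ l ↔ D ∈ l) := by
  change C ∩ Dᶜ ∪ D ∩ Cᶜ ∈ l ↔ _
  rw [h.union_mem_iff (hC.inter hD.compl) (hD.inter hC.compl), inter_mem_iff, inter_mem_iff,
    h.compl_mem_iff hC, h.compl_mem_iff hD]
  tauto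

end IsEnd

/-- The filter of tails of the sequence `h * g ^ n`. -/
def rayFilter (h g : G) : Filter G := map (fun n : ℕ => h * g ^ n) atTop

theorem mem_rayFilter {h g : G} {C : Set G} :
    C ∈ rayFilter h g ↔ ∀ᶠ n : ℕ in atTop, h * g ^ n ∈ C :=
  Iff.rfl

theorem smul_rayFilter (k h g : G) : k • rayFilter h g = rayFilter (k * h) g := by
  rw [rayFilter, rayFilter, ← Filter.map_smul, Filter.map_map]
  simp only [Function.comp_def, smul_eq_mul, mul_assoc]

theorem compl_mem_rayFilter_of_finite {g : G} (hg : ¬IsOfFinOrder g) (h : G) {D : Set G}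
    (hD : D.Finite) : Dᶜ ∈ rayFilter h g := by
  have hinj : Function.Injective fun n : ℕ => h * g ^ n :=
    (mul_right_injective h).comp (injective_pow_iff_not_isOfFinOrder.2 hg)
  rw [rayFilter, ← Nat.cofinite_eq_atTop]
  exact hinj.tendsto_cofinite hD.compl_mem_cofinite

theorem eventually_mul_mem_iff_mem_rayFilter {g : G} (hg : ¬IsOfFinOrder g) (h b : G) {C : Set G}
    (hC : AlmostInvariant C) : (∀ᶠ n : ℕ in atTop, h * g ^ n * b ∈ C) ↔ C ∈ rayFilter h g :=
  eventually_congr <| (mem_rayFilter.1 (compl_mem_rayFilter_of_finite hg h (hC b))).mono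
    fun _ hn => (not_not.1 hn).symm

theorem isEnd_rayFilter {g : G} (hg : ¬IsOfFinOrder g) (h : G) : IsEnd (rayFilter h g) where
  neBot := map_neBot
  mem_or_compl_mem C hC := by
    obtain ⟨N, hN⟩ := eventually_atTop.1 (compl_mem_rayFilter_of_finite hg h (hC g))
    have hconst : ∀ n ≥ N, (h * g ^ n ∈ C ↔ h * g ^ N ∈ C) := fun n hn => by
      induction n, hn using Nat.le_induction with
      | base => rfl
      | succ n hn ih =>
        have hstep : h * g ^ n ∈ C ↔ h * g ^ n * g ∈ C := not_not.1 (hN n hn)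
        rw [pow_succ, ← mul_assoc, ← hstep, ih]
    by_cases hmem : h * g ^ N ∈ C
    · exact Or.inl (eventually_atTop.2 ⟨N, fun n hn => (hconst n hn).2 hmem⟩)
    · exact Or.inr (eventually_atTop.2 ⟨N, fun n hn => mt (hconst n hn).1 hmem⟩)

theorem mem_rayFilter_pow_iff {g : G} (hg : ¬IsOfFinOrder g) (h : G) {k : ℕ} (hk : 0 < k)
    {C : Set G} (hC : AlmostInvariant C) : C ∈ rayFilter h (g ^ k) ↔ C ∈ rayFilter h g := by
  have : (rayFilter h (g ^ k)).NeBot := map_neBot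
  refine (isEnd_rayFilter hg h).mem_iff_of_le (fun D hD => ?_) hC
  have hsub := (tendsto_id.const_mul_atTop' hk).eventually (mem_rayFilter.1 hD)
  simpa only [mem_rayFilter, ← pow_mul, id_eq] using hsub

/-- The cut `C` has exactly one of the two ends on its side. -/
def Separates (l l' : Filter G) (C : Set G) : Prop := ¬(C ∈ l ↔ C ∈ l')

theorem Separates.symmDiff {l l' : Filter G} (hl : IsEnd l) (hl' : IsEnd l') {C D : Set G}
    (hC : AlmostInvariant C) (hD : AlmostInvariant D) (h : Separates l l' C) :
    Separates l l' D ∨ Separates l l' (C ∆ D) := by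
  simp only [Separates, hl.symmDiff_mem_iff hC hD, hl'.symmDiff_mem_iff hC hD] at *
  tauto

theorem Separates.compl {l l' : Filter G} (hl : IsEnd l) (hl' : IsEnd l') {C : Set G}
    (hC : AlmostInvariant C) (h : Separates l l' C) : Separates l l' Cᶜ := by
  simpa only [Separates, hl.compl_mem_iff hC, hl'.compl_mem_iff hC, not_iff_not] using h

theorem separates_smul_iff {l l' : Filter G} {k : G} {C : Set G} :
    Separates (k • l) (k • l') (k • C) ↔ Separates l l' C := by
  simp only [Separates, smul_set_mem_smul_filter_iff]

/-- Among the almost invariant sets separating the ends `l` and `l'`, the set `C` minimizes `ν`. -/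
structure IsOptimalCut {α : Type*} [LE α] (ν : Set G → α) (l l' : Filter G) (C : Set G) :
    Prop where
  almostInvariant : AlmostInvariant C
  separates : Separates l l' C
  le : ∀ D, AlmostInvariant D → Separates l l' D → ν C ≤ ν D

namespace IsOptimalCut

variable {α : Type*} [LE α] {ν : Set G → α} {l l' : Filter G} {C : Set G}

theorem compl (hl : IsEnd l) (hl' : IsEnd l') (hν : ∀ C, ν Cᶜ = ν C)
    (h : IsOptimalCut ν l l' C) : IsOptimalCut ν l l' Cᶜ where
  almostInvariant := h.almostInvariant.compl
  separates := h.separates.compl hl hl' h.almostInvariant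
  le D hD hsep := hν C ▸ h.le D hD hsep

theorem smul (hν : ∀ (g : G) C, ν (g • C) = ν C) (h : IsOptimalCut ν l l' C) (k : G) :
    IsOptimalCut ν (k • l) (k • l') (k • C) where
  almostInvariant := h.almostInvariant.smul k
  separates := separates_smul_iff.2 h.separates
  le D hD hsep := by
    rw [hν, ← hν k⁻¹ D]
    refine h.le _ (hD.smul _) ?_
    rwa [← separates_smul_iff (k := k), smul_inv_smul]

end IsOptimalCut

section Nested

variable {ι : Type*} [Fintype ι] {β : ℕ → G} {s : ι → G} {l l' m m' : Filter G} {C D : Set G}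

theorem IsOptimalCut.not_separates_inter_and_union (hβ : Function.Surjective β)
    (hC : IsOptimalCut (cutWeight β s) l l' C) (hD : IsOptimalCut (cutWeight β s) m m' D)
    (hCD : Crossing C D) : ¬(Separates l l' (C ∩ D) ∧ Separates m m' (C ∪ D)) := by
  rintro ⟨hinter, hunion⟩
  have hC' := hC.almostInvariant
  have hD' := hD.almostInvariant
  exact (cutWeight_inter_add_union_lt hβ hC' hD' hCD).not_ge
    (add_le_add (hC.le _ (hC'.inter hD') hinter) (hD.le _ (hC'.union hD') hunion))

theorem IsOptimalCut.separates_or_of_crossing (hβ : Function.Surjective β) (hl : IsEnd l)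
    (hl' : IsEnd l') (hm : IsEnd m) (hm' : IsEnd m')
    (hC : IsOptimalCut (cutWeight β s) l l' C) (hD : IsOptimalCut (cutWeight β s) m m' D)
    (hCD : Crossing C D) : Separates l l' D ∨ Separates m m' C := by
  by_contra! hsep
  wlog hCm : C ∉ m generalizing C
  · rw [not_not] at hCm
    refine this (hC.compl hl hl' cutWeight_compl) hCD.compl_left
      ⟨hsep.1, fun h => hsep.2 ?_⟩ ?_
    · exact _root_.compl_compl C ▸ h.compl hm hm' hC.almostInvariant.compl
    · rwa [hm.compl_mem_iff hC.almostInvariant, not_not]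
  wlog hDl : D ∈ l generalizing D
  · refine this (hD.compl hm hm' cutWeight_compl) hCD.compl_right
      ⟨fun h => hsep.1 ?_, hsep.2⟩ ?_
    · exact _root_.compl_compl D ▸ h.compl hl hl' hD.almostInvariant.compl
    · rwa [hl.compl_mem_iff hD.almostInvariant]
  have hDl' : D ∈ l' := (not_not.1 hsep.1).1 hDl
  have hCm' : C ∉ m' := mt (not_not.1 hsep.2).2 hCm
  refine hC.not_separates_inter_and_union hβ hD hCD ⟨?_, ?_⟩
  · simpa only [Separates, inter_mem_iff, hDl, hDl', and_true] using hC.separates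
  · simpa only [Separates, hm.union_mem_iff hC.almostInvariant hD.almostInvariant,
      hm'.union_mem_iff hC.almostInvariant hD.almostInvariant, hCm, hCm', false_or] using
      hD.separates

theorem IsOptimalCut.not_separates_of_crossing (hβ : Function.Surjective β) (hl : IsEnd l)
    (hl' : IsEnd l') (hm : IsEnd m) (hm' : IsEnd m')
    (hC : IsOptimalCut (cutWeight β s) l l' C) (hD : IsOptimalCut (cutWeight β s) m m' D)
    (hCD : Crossing C D) : ¬Separates l l' D := by
  intro hsep
  wlog hiff : C ∈ l ↔ D ∈ l generalizing D
  · refine this (hD.compl hm hm' cutWeight_compl) hCD.compl_right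
      (hsep.compl hl hl' hD.almostInvariant) ?_
    rw [hl.compl_mem_iff hD.almostInvariant]
    tauto
  have hC' := hC.almostInvariant
  have hD' := hD.almostInvariant
  have hsepC := hC.separates
  have hinter : Separates l l' (C ∩ D) := by
    simp only [Separates, inter_mem_iff] at *
    tauto
  have hunion : Separates l l' (C ∪ D) := by
    simp only [Separates, hl.union_mem_iff hC' hD', hl'.union_mem_iff hC' hD'] at *
    tauto
  by_cases hmC : Separates m m' C
  · have hle : cutWeight β s D ≤ cutWeight β s (C ∪ D) :=
      (hD.le _ hC' hmC).trans (hC.le _ (hC'.union hD') hunion)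
    exact (cutWeight_inter_add_union_lt hβ hC' hD' hCD).not_ge
      (add_le_add (hC.le _ (hC'.inter hD') hinter) hle)
  · by_cases hCm : C ∈ m
    · have hCm' : C ∈ m' := (not_not.1 hmC).1 hCm
      refine hD.not_separates_inter_and_union hβ hC hCD.symm ⟨?_, Set.union_comm C D ▸ hunion⟩
      simpa only [Separates, inter_mem_iff, hCm, hCm', and_true] using hD.separates
    · have hCm' : C ∉ m' := mt (not_not.1 hmC).2 hCm
      refine hC.not_separates_inter_and_union hβ hD hCD ⟨hinter, ?_⟩
      simpa only [Separates, hm.union_mem_iff hC' hD', hm'.union_mem_iff hC' hD', hCm, hCm',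
        false_or] using hD.separates

theorem IsOptimalCut.not_crossing (hβ : Function.Surjective β) (hl : IsEnd l)
    (hl' : IsEnd l') (hm : IsEnd m) (hm' : IsEnd m')
    (hC : IsOptimalCut (cutWeight β s) l l' C) (hD : IsOptimalCut (cutWeight β s) m m' D) :
    ¬Crossing C D := fun hCD =>
  (hC.separates_or_of_crossing hβ hl hl' hm hm' hD hCD).elim
    (hC.not_separates_of_crossing hβ hl hl' hm hm' hD hCD)
    (hD.not_separates_of_crossing hβ hm hm' hl hl' hC hCD.symm)

end Nested

end AlmostInvariant

/-! ### Finiteness of the minimal cuts -/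

section Potential

variable {G ι A : Type*} [Group G] [AddCommGroup A]

/-- The lift of the right translation by `(s i)⁻¹` to `G × A` along which the second coordinate
changes by the value of the 1-cochain `c` on the edge that is traversed. -/
def skewPerm (s : ι → G) (c : ι → G → A) (i : ι) : Equiv.Perm (G × A) where
  toFun p := (p.1 * (s i)⁻¹, p.2 - c i (p.1 * (s i)⁻¹))
  invFun p := (p.1 * s i, p.2 + c i p.1)
  left_inv p := by simp
  right_inv p := by simp

/-- The action of the free group on `G × A` integrating the 1-cochain `c` along words; it factors
through `G` exactly when `c` is the coboundary of a potential. -/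
def skewAction (s : ι → G) (c : ι → G → A) : FreeGroup ι →* Equiv.Perm (G × A) :=
  FreeGroup.lift (skewPerm s c)

variable {s : ι → G} {c : ι → G → A}

theorem skewAction_of (i : ι) (p : G × A) :
    skewAction s c (FreeGroup.of i) p = (p.1 * (s i)⁻¹, p.2 - c i (p.1 * (s i)⁻¹)) := by
  rw [skewAction, FreeGroup.lift_apply_of]
  rfl

theorem skewAction_of_inv (i : ι) (p : G × A) :
    skewAction s c (FreeGroup.of i)⁻¹ p = (p.1 * s i, p.2 + c i p.1) := by
  rw [map_inv, skewAction, FreeGroup.lift_apply_of]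
  rfl

theorem skewAction_apply_fst (w : FreeGroup ι) (p : G × A) :
    (skewAction s c w p).1 = p.1 * (FreeGroup.lift s w)⁻¹ := by
  induction w using FreeGroup.induction_on generalizing p with
  | C1 => simp
  | of i => rw [skewAction_of, FreeGroup.lift_apply_of]
  | inv_of i _ => rw [skewAction_of_inv, map_inv, inv_inv, FreeGroup.lift_apply_of]
  | mul u v hu hv => rw [map_mul, map_mul, Equiv.Perm.mul_apply, hu, hv, mul_inv_rev, mul_assoc]

theorem skewAction_apply_snd_of_coboundary {χ : G → A} (h : ∀ i y, c i y = χ (y * s i) - χ y)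
    (w : FreeGroup ι) (p : G × A) :
    (skewAction s c w p).2 = p.2 + χ (p.1 * (FreeGroup.lift s w)⁻¹) - χ p.1 := by
  induction w using FreeGroup.induction_on generalizing p with
  | C1 => simp
  | of i =>
    simp only [skewAction_of, h, inv_mul_cancel_right, FreeGroup.lift_apply_of, sub_sub_eq_add_sub]
  | inv_of i _ =>
    rw [skewAction_of_inv, h, map_inv, inv_inv, FreeGroup.lift_apply_of, add_sub_assoc]
  | mul u v hu hv =>
    rw [map_mul, Equiv.Perm.mul_apply, hu, hv, skewAction_apply_fst, map_mul, mul_inv_rev,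
      mul_assoc]
    abel

theorem exists_finite_skewAction_congr (s : ι → G) (w : FreeGroup ι) :
    ∃ P : Set G, P.Finite ∧ ∀ (c c' : ι → G → A) (p : G × A),
      (∀ q ∈ P, ∀ i, c i (p.1 * q) = c' i (p.1 * q)) →
        skewAction s c w p = skewAction s c' w p := by
  induction w using FreeGroup.induction_on with
  | C1 => exact ⟨∅, Set.finite_empty, fun c c' p _ => by simp⟩
  | of i =>
    refine ⟨{(s i)⁻¹}, Set.finite_singleton _, fun c c' p h => ?_⟩
    rw [skewAction_of, skewAction_of, h _ rfl]
  | inv_of i _ =>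
    refine ⟨{1}, Set.finite_singleton _, fun c c' p h => ?_⟩
    have h1 := h 1 rfl i
    rw [mul_one] at h1
    rw [skewAction_of_inv, skewAction_of_inv, h1]
  | mul u v hu hv =>
    obtain ⟨P, hP, hPu⟩ := hu
    obtain ⟨Q, hQ, hQv⟩ := hv
    refine ⟨((FreeGroup.lift s v)⁻¹ * ·) '' P ∪ Q, (hP.image _).union hQ, fun c c' p h => ?_⟩
    rw [map_mul, map_mul, Equiv.Perm.mul_apply, Equiv.Perm.mul_apply,
      hQv c c' p fun q hq => h q (Or.inr hq)]
    refine hPu c c' _ fun q hq => ?_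
    rw [skewAction_apply_fst, mul_assoc]
    exact h _ (Or.inl ⟨q, hq, rfl⟩)

theorem exists_potential_of_skewAction_relators (hs : Function.Surjective (FreeGroup.lift s))
    {R : Set (FreeGroup ι)} (hR : Subgroup.normalClosure R = (FreeGroup.lift s).ker)
    (h : ∀ r ∈ R, skewAction s c r = 1) : ∃ f : G → A, ∀ g i, f (g * s i) = f g + c i g := by
  obtain ⟨θ, hθ⟩ := exists_hom_of_relators hs hR (skewAction s c) h
  have hfst : ∀ g, (θ g⁻¹ (1, 0)).1 = g := fun g => by
    obtain ⟨w, hw⟩ := hs g⁻¹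
    rw [← hw, hθ, skewAction_apply_fst, hw, inv_inv, one_mul]
  refine ⟨fun g => (θ g⁻¹ (1, 0)).2, fun g i => ?_⟩
  have hsi : (s i)⁻¹ = FreeGroup.lift s (FreeGroup.of i)⁻¹ := by
    rw [map_inv, FreeGroup.lift_apply_of]
  change (θ (g * s i)⁻¹ (1, 0)).2 = _
  rw [mul_inv_rev, map_mul, Equiv.Perm.mul_apply, hsi, hθ, skewAction_of_inv, hfst]

variable (A) in
theorem exists_finite_window_potential (hs : Function.Surjective (FreeGroup.lift s))
    {R : Set (FreeGroup ι)} (hRf : R.Finite)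
    (hR : Subgroup.normalClosure R = (FreeGroup.lift s).ker) :
    ∃ P : Set G, P.Finite ∧ ∀ c : ι → G → A,
      (∀ x, ∃ χ : G → A, ∀ q ∈ P, ∀ i, c i (x * q) = χ (x * q * s i) - χ (x * q)) →
        ∃ f : G → A, ∀ g i, f (g * s i) = f g + c i g := by
  choose P hPf hP using exists_finite_skewAction_congr (A := A) s
  refine ⟨⋃ r ∈ R, P r, hRf.biUnion fun r _ => hPf r, fun c hc => ?_⟩
  refine exists_potential_of_skewAction_relators hs hR fun r hr => Equiv.ext fun p => ?_
  have hφr : FreeGroup.lift s r = 1 := by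
    rw [← MonoidHom.mem_ker, ← hR]
    exact Subgroup.subset_normalClosure hr
  obtain ⟨χ, hχ⟩ := hc p.1
  rw [hP r c (fun i y => χ (y * s i) - χ y) p fun q hq => hχ q (Set.mem_biUnion hr hq),
    Equiv.Perm.one_apply]
  ext1
  · rw [skewAction_apply_fst, hφr, inv_one, mul_one]
  · rw [skewAction_apply_snd_of_coboundary fun _ _ => rfl, hφr, inv_one, mul_one,
      add_sub_cancel_right]

/-- Whenever the edge boundary of a cut falls into two pieces that are `B`-far apart, each piece is
itself the boundary of a cut. -/
def IsSplittingWindow (s : ι → G) (B : Set G) : Prop :=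
  ∀ C D₁ D₂ : Set G, (∀ i, rightBoundary (s i) C ⊆ D₁ ∪ D₂) → (∀ x ∈ D₁, ∀ y ∈ D₂, x⁻¹ * y ∉ B) →
    ∃ C₁ : Set G, ∀ i, rightBoundary (s i) C₁ = rightBoundary (s i) C ∩ D₁

open scoped Pointwise in
theorem exists_finite_isSplittingWindow (hs : Function.Surjective (FreeGroup.lift s))
    {R : Set (FreeGroup ι)} (hRf : R.Finite)
    (hR : Subgroup.normalClosure R = (FreeGroup.lift s).ker) :
    ∃ B : Set G, B.Finite ∧ IsSplittingWindow s B := by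
  classical
  obtain ⟨P, hPf, hP⟩ := exists_finite_window_potential (ZMod 2) hs hRf hR
  refine ⟨P⁻¹ * P, hPf.inv.mul hPf, fun C D₁ D₂ hD hB => ?_⟩
  set χ : G → ZMod 2 := C.indicator 1
  have hχ : ∀ i y, χ (y * s i) - χ y ≠ 0 ↔ y ∈ rightBoundary (s i) C := fun i y => by
    by_cases hy : y ∈ C <;> by_cases hys : y * s i ∈ C <;> simp [χ, mem_rightBoundary, hy, hys]
  set c : ι → G → ZMod 2 := fun i => D₁.indicator fun y => χ (y * s i) - χ y with hc
  have hc_ne : ∀ i y, c i y ≠ 0 ↔ y ∈ rightBoundary (s i) C ∩ D₁ := fun i y => by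
    rw [hc, Set.indicator_apply_ne_zero, Set.inter_comm]
    exact and_congr_left' (hχ i y)
  have hlocal : ∀ x, ∃ χ' : G → ZMod 2, ∀ q ∈ P, ∀ i,
      c i (x * q) = χ' (x * q * s i) - χ' (x * q) := fun x => by
    by_cases hx : ∃ p ∈ P, x * p ∈ D₁
    · obtain ⟨p, hp, hxp⟩ := hx
      refine ⟨χ, fun q hq i => ?_⟩
      have hxq : x * q ∉ D₂ := fun h => hB _ hxp _ h
        ⟨p⁻¹, Set.inv_mem_inv.2 hp, q, hq, by simp only; group⟩
      by_cases hmem : x * q ∈ D₁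
      · exact Set.indicator_of_mem hmem _
      · refine (Set.indicator_of_notMem hmem _).trans ?_
        by_contra hne
        exact (hD i ((hχ i _).1 (Ne.symm hne))).elim hmem hxq
    · push Not at hx
      exact ⟨0, fun q hq i => by simp [hc, hx q hq]⟩
  obtain ⟨f, hf⟩ := hP c hlocal
  refine ⟨{g | f g = 1}, fun i => Set.ext fun g => ?_⟩
  have hjump : ∀ a b : ZMod 2, ¬(a = 1 ↔ a + b = 1) ↔ b ≠ 0 := by decide
  rw [← hc_ne, mem_rightBoundary, Set.mem_ofPred_eq, Set.mem_ofPred_eq, hf]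
  exact hjump _ _

end Potential

section MinimalCuts

open Filter
open scoped Pointwise symmDiff

variable {G ι : Type*} [Group G]

/-- The origins of the edges of the Cayley graph that cross the cut `C`. -/
def boundary (s : ι → G) (C : Set G) : Set G := ⋃ i, rightBoundary (s i) C

/-- Any partition of `D` into two nonempty pieces is crossed by a jump with increment in `B`. -/
def IsCoarselyConnected (B D : Set G) : Prop :=
  ∀ E : Set G, (D ∩ E).Nonempty → (D \ E).Nonempty → ∃ x ∈ D ∩ E, ∃ y ∈ D \ E, x⁻¹ * y ∈ B

theorem IsCoarselyConnected.subset_pow {B D : Set G} (hD : D.Finite) (h1 : (1 : G) ∈ D)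
    (hc : IsCoarselyConnected B D) : D ⊆ insert 1 B ^ D.ncard := by
  have h1mem : (1 : G) ∈ insert 1 B := Set.mem_insert 1 B
  have hgrow : ∀ k, D ⊆ insert 1 B ^ k ∨ k + 1 ≤ (D ∩ insert 1 B ^ k).ncard := fun k => by
    induction k with
    | zero => exact Or.inr ((Set.ncard_pos (hD.inter_of_left _)).2 ⟨1, h1, rfl⟩)
    | succ k ih =>
      have hmono : insert 1 B ^ k ⊆ insert 1 B ^ (k + 1) :=
        Set.pow_subset_pow_right h1mem k.le_succ
      by_cases hsub : D ⊆ insert 1 B ^ k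
      · exact Or.inl (hsub.trans hmono)
      obtain ⟨x, hx, y, hy, hxy⟩ :=
        hc (insert 1 B ^ k) ⟨1, h1, Set.one_mem_pow h1mem⟩ (Set.sdiff_nonempty.2 hsub)
      have hy' : y ∈ insert 1 B ^ (k + 1) := by
        rw [pow_succ, ← mul_inv_cancel_left x y]
        exact Set.mul_mem_mul hx.2 (Or.inr hxy)
      have hssub : D ∩ insert 1 B ^ k ⊂ D ∩ insert 1 B ^ (k + 1) :=
        ⟨Set.inter_subset_inter_right _ hmono, fun h => hy.2 (h ⟨hy.1, hy'⟩).2⟩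
      exact Or.inr ((Nat.succ_le_succ (ih.resolve_left hsub)).trans
        (Set.ncard_lt_ncard hssub (hD.inter_of_left _)))
  exact (hgrow D.ncard).resolve_right fun h =>
    (h.trans (Set.ncard_le_ncard Set.inter_subset_left hD)).not_gt D.ncard.lt_succ_self

variable {s : ι → G} {C D : Set G} {l l' : Filter G}

theorem mem_boundary {x : G} : x ∈ boundary s C ↔ ∃ i, x ∈ rightBoundary (s i) C := Set.mem_iUnion

theorem boundary_smul (g : G) (C : Set G) : boundary s (g • C) = g • boundary s C := by
  simp only [boundary, rightBoundary_smul, Set.smul_set_iUnion]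

theorem rightBoundary_subset_boundary (s : ι → G) (C : Set G) (i : ι) :
    rightBoundary (s i) C ⊆ boundary s C := Set.subset_iUnion (fun i => rightBoundary (s i) C) i

theorem boundary_nonempty [l.NeBot] [l'.NeBot] (hs : Subgroup.closure (Set.range s) = ⊤)
    (h : Separates l l' C) : (boundary s C).Nonempty := by
  by_contra hempty
  rw [Set.not_nonempty_iff_eq_empty, boundary, Set.iUnion_eq_empty] at hempty
  have hconst := mem_iff_mem_of_rightBoundary_eq_empty hs (Set.forall_mem_range.2 hempty)
  have htriv : C = ∅ ∨ C = Set.univ := by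
    by_cases h1 : 1 ∈ C
    · exact Or.inr (Set.eq_univ_of_forall fun x => (hconst x 1).2 h1)
    · exact Or.inl (Set.eq_empty_of_forall_notMem fun x hx => h1 ((hconst x 1).1 hx))
  rcases htriv with rfl | rfl <;> simp [Separates, Filter.empty_notMem] at h

theorem eq_of_rightBoundary_eq (hs : Subgroup.closure (Set.range s) = ⊤)
    (h : ∀ i, rightBoundary (s i) C = rightBoundary (s i) D) (h1 : (1 : G) ∈ C ↔ (1 : G) ∈ D) :
    C = D := by
  have hempty : ∀ b ∈ Set.range s, rightBoundary b (C ∆ D) = ∅ := by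
    rintro _ ⟨i, rfl⟩
    rw [rightBoundary_symmDiff, h, symmDiff_self, Set.bot_eq_empty]
  ext x
  have hx := mem_iff_mem_of_rightBoundary_eq_empty hs hempty x 1
  simp only [Set.mem_symmDiff] at hx
  tauto

theorem AlmostInvariant.finite_boundary [Finite ι] (h : AlmostInvariant C) :
    (boundary s C).Finite :=
  Set.finite_iUnion fun i => h (s i)

variable [Fintype ι]

theorem ncard_boundary_le_cutSize : (boundary s C).ncard ≤ cutSize s C :=
  Set.ncard_iUnion_le_of_fintype _

theorem cutSize_lt_of_rightBoundary_subset (hC : AlmostInvariant C)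
    (h : ∀ i, rightBoundary (s i) D ⊆ rightBoundary (s i) C) {x : G} (hx : x ∈ boundary s C)
    (hxD : x ∉ boundary s D) : cutSize s D < cutSize s C := by
  obtain ⟨i, hi⟩ := mem_boundary.1 hx
  refine Finset.sum_lt_sum (fun j _ => Set.ncard_le_ncard (h j) (hC _)) ⟨i, Finset.mem_univ i, ?_⟩
  exact Set.ncard_lt_ncard ⟨h i, fun hsub => hxD (mem_boundary.2 ⟨i, hsub hi⟩)⟩ (hC _)

/-- `C` is a cut of minimal size among those separating some pair of ends. -/
def IsMinimalCut (s : ι → G) (C : Set G) : Prop :=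
  ∃ l l' : Filter G, IsEnd l ∧ IsEnd l' ∧ IsOptimalCut (cutSize s) l l' C

namespace IsMinimalCut

theorem smul (h : IsMinimalCut s C) (g : G) : IsMinimalCut s (g • C) := by
  obtain ⟨l, l', hl, hl', hC⟩ := h
  exact ⟨_, _, hl.smul g, hl'.smul g, hC.smul (cutSize_smul s) g⟩

theorem exists_one_mem_boundary_smul (hs : Subgroup.closure (Set.range s) = ⊤)
    (h : IsMinimalCut s C) : ∃ g : G, 1 ∈ boundary s (g • C) := by
  obtain ⟨l, l', hl, hl', hC⟩ := h
  have := hl.neBot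
  have := hl'.neBot
  obtain ⟨x, hx⟩ := boundary_nonempty hs hC.separates
  refine ⟨x⁻¹, ?_⟩
  rwa [boundary_smul, Set.mem_smul_set_iff_inv_smul_mem, inv_inv, smul_eq_mul, mul_one]

theorem isCoarselyConnected_boundary (hs : Subgroup.closure (Set.range s) = ⊤) {B : Set G}
    (hB : IsSplittingWindow s B) (h : IsMinimalCut s C) : IsCoarselyConnected B (boundary s C) := by
  obtain ⟨l, l', hl, hl', hC⟩ := h
  intro E hin hout
  by_contra! hfar
  obtain ⟨C₁, hC₁⟩ := hB C (boundary s C ∩ E) (boundary s C \ E)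
    (fun i => by rw [Set.inter_union_sdiff]; exact rightBoundary_subset_boundary s C i) hfar
  have hsplit : ∀ i, rightBoundary (s i) C₁ = rightBoundary (s i) C ∩ E := fun i => by
    rw [hC₁, ← Set.inter_assoc, Set.inter_eq_left.2 (rightBoundary_subset_boundary s C i)]
  have hsplit' : ∀ i, rightBoundary (s i) (C ∆ C₁) = rightBoundary (s i) C \ E := fun i => by
    rw [rightBoundary_symmDiff, hsplit, symmDiff_of_ge Set.inter_subset_left,
      Set.sdiff_self_inter]
  have hC' := hC.almostInvariant
  have hC₁' : AlmostInvariant C₁ := almostInvariant_of_closure hs <| Set.forall_mem_range.2 fun i =>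
    (hC' (s i)).subset (hsplit i ▸ Set.inter_subset_left)
  rcases hC.separates.symmDiff hl hl' hC' hC₁' with hsep | hsep
  · obtain ⟨x, hx⟩ := hout
    refine (hC.le _ hC₁' hsep).not_gt (cutSize_lt_of_rightBoundary_subset hC'
      (fun i => hsplit i ▸ Set.inter_subset_left) hx.1 fun hxC₁ => ?_)
    obtain ⟨i, hi⟩ := mem_boundary.1 hxC₁
    exact hx.2 (hsplit i ▸ hi).2
  · obtain ⟨x, hx⟩ := hin
    refine (hC.le _ (hC'.symmDiff hC₁') hsep).not_gt (cutSize_lt_of_rightBoundary_subset hC'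
      (fun i => hsplit' i ▸ Set.sdiff_subset) hx.1 fun hxC₁ => ?_)
    obtain ⟨i, hi⟩ := mem_boundary.1 hxC₁
    exact (hsplit' i ▸ hi).2 hx.2

end IsMinimalCut

theorem finite_isMinimalCut (hs : Subgroup.closure (Set.range s) = ⊤) {B : Set G} (hBf : B.Finite)
    (hB : IsSplittingWindow s B) (N : ℕ) :
    {C : Set G | IsMinimalCut s C ∧ cutSize s C ≤ N ∧ 1 ∈ boundary s C}.Finite := by
  have hball : (insert 1 B ^ N).Finite := by
    induction N with
    | zero => simp
    | succ N ih => exact pow_succ (insert 1 B) N ▸ ih.mul (hBf.insert 1)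
  refine Set.Finite.of_finite_image (f := fun C => ((fun i => rightBoundary (s i) C), (1 : G) ∈ C))
    (((Set.Finite.pi fun _ => hball.finite_subsets).prod Set.finite_univ).subset ?_) ?_
  · rintro _ ⟨C, ⟨hC, hN, h1⟩, rfl⟩
    refine ⟨fun i _ => ?_, trivial⟩
    have hfin : (boundary s C).Finite := by
      obtain ⟨_, _, _, _, hC⟩ := hC
      exact hC.almostInvariant.finite_boundary
    exact (rightBoundary_subset_boundary s C i).trans <|
      ((hC.isCoarselyConnected_boundary hs hB).subset_pow hfin h1).trans <|
      Set.pow_subset_pow_right (Set.mem_insert 1 B) (ncard_boundary_le_cutSize.trans hN)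
  · intro C _ D _ heq
    rw [Prod.mk.injEq] at heq
    exact eq_of_rightBoundary_eq hs (congrFun heq.1) (iff_of_eq heq.2)

theorem exists_isOptimalCut_cutWeight (hs : Subgroup.closure (Set.range s) = ⊤) {B : Set G}
    (hBf : B.Finite) (hB : IsSplittingWindow s B) (β : ℕ → G) (hl : IsEnd l) (hl' : IsEnd l')
    (hex : ∃ C, AlmostInvariant C ∧ Separates l l' C) :
    ∃ C, IsOptimalCut (cutWeight β s) l l' C := by
  obtain ⟨C₀, ⟨haC₀, hsC₀⟩, hmin⟩ := WellFounded.has_min (measure (cutSize s)).wf _ hex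
  have hC₀ : IsOptimalCut (cutSize s) l l' C₀ :=
    ⟨haC₀, hsC₀, fun D hD hsD => not_lt.1 (hmin D ⟨hD, hsD⟩)⟩
  have hfin : (cutWeight β s '' {C | IsOptimalCut (cutSize s) l l' C}).Finite := by
    refine ((finite_isMinimalCut hs hBf hB (cutSize s C₀)).image (cutWeight β s)).subset ?_
    rintro _ ⟨C, hC, rfl⟩
    have hCmin : IsMinimalCut s C := ⟨l, l', hl, hl', hC⟩
    obtain ⟨g, hg⟩ := hCmin.exists_one_mem_boundary_smul hs
    refine ⟨g • C, ⟨hCmin.smul g, ?_, hg⟩, cutWeight_smul _ _⟩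
    rw [cutSize_smul]
    exact hC.le _ haC₀ hsC₀
  obtain ⟨_, ⟨C, hC, rfl⟩, hCmin⟩ := Set.exists_min_image _ id hfin ⟨_, C₀, hC₀, rfl⟩
  refine ⟨C, hC.almostInvariant, hC.separates, fun D hD hsD => ?_⟩
  rcases (hC.le D hD hsD).lt_or_eq with hlt | heq
  · exact (cutWeight_lt_of_cutSize_lt hlt).le
  · exact hCmin _ ⟨D, ⟨hD, hsD, fun E hE hsE => heq ▸ hC.le E hE hsE⟩, rfl⟩

end MinimalCuts

section OptimalCuts

open Filter
open scoped Pointwise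

variable {G ι : Type*} [Group G]

theorem exists_pow_smul_ssubset {g : G} {C : Set G} (hC : C ∈ rayFilter 1 g)
    (hC' : Cᶜ ∈ rayFilter 1 g⁻¹) (hnest : ∀ n, ¬Crossing (g ^ n • C) C) : ∃ n, g ^ n • C ⊂ C := by
  obtain ⟨N, hN⟩ := eventually_atTop.1 ((mem_rayFilter.1 hC).and (mem_rayFilter.1 hC'))
  simp only [one_mul, Set.mem_compl_iff] at hN
  have hpos (k : ℕ) (hk : N ≤ k) : g ^ (k : ℤ) ∈ C := by simpa using (hN k hk).1
  have hneg (k : ℕ) (hk : N ≤ k) : g ^ (-k : ℤ) ∉ C := by simpa using (hN k hk).2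
  have hmem (k : ℤ) : g ^ k ∈ g ^ (2 * N) • C ↔ g ^ (k - 2 * N) ∈ C := by
    rw [Set.mem_smul_set_iff_inv_smul_mem, smul_eq_mul, ← zpow_natCast, ← zpow_neg, ← zpow_add]
    congr! 2
    push_cast
    ring
  have hN₁ : g ^ (N : ℤ) ∈ C := hpos N le_rfl
  have hN₁' : g ^ (N : ℤ) ∉ g ^ (2 * N) • C := by
    rw [hmem, show (N : ℤ) - 2 * N = -N by ring]
    exact hneg N le_rfl
  have hN₃ : g ^ (3 * N : ℤ) ∈ C := hpos (3 * N) (by lia)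
  have hN₃' : g ^ (3 * N : ℤ) ∈ g ^ (2 * N) • C := by
    rwa [hmem, show (3 * N : ℤ) - 2 * N = N by ring]
  have hnegN : g ^ (-N : ℤ) ∉ C := hneg N le_rfl
  have hnegN' : g ^ (-N : ℤ) ∉ g ^ (2 * N) • C := by
    rw [hmem, show (-N : ℤ) - 2 * N = -(3 * N : ℕ) by push_cast; ring]
    exact hneg (3 * N) (by lia)
  refine ⟨2 * N, ?_, fun h => hN₁' (h hN₁)⟩
  rcases not_not.1 (hnest (2 * N)) with h | h | h | h
  · exact h
  · exact absurd hN₃ (h hN₃')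
  · exact absurd (h hnegN') hnegN
  · exact absurd (h hN₁) hN₁'

variable [Fintype ι]

/-- The cuts of minimal weight among those separating the two ends of some translate of an
infinite cyclic subgroup. -/
def optimalCuts (β : ℕ → G) (s : ι → G) : Set (Set G) :=
  {C | ∃ h g, ¬IsOfFinOrder g ∧
    IsOptimalCut (cutWeight β s) (rayFilter h g) (rayFilter h g⁻¹) C}

variable {β : ℕ → G} {s : ι → G} {C : Set G}

theorem isEnd_rayFilter_inv {g : G} (hg : ¬IsOfFinOrder g) (h : G) : IsEnd (rayFilter h g⁻¹) :=
  isEnd_rayFilter (mt isOfFinOrder_inv_iff.1 hg) h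

theorem isMinimalCut_of_mem_optimalCuts (hC : C ∈ optimalCuts β s) : IsMinimalCut s C := by
  obtain ⟨h, g, hg, hC⟩ := hC
  exact ⟨_, _, isEnd_rayFilter hg h, isEnd_rayFilter_inv hg h, hC.almostInvariant, hC.separates,
    fun D hD hsep => cutSize_le_of_cutWeight_le (hC.le D hD hsep)⟩

theorem smul_mem_optimalCuts (k : G) (hC : C ∈ optimalCuts β s) : k • C ∈ optimalCuts β s := by
  obtain ⟨h, g, hg, hC⟩ := hC
  refine ⟨k * h, g, hg, ?_⟩
  rw [← smul_rayFilter, ← smul_rayFilter]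
  exact hC.smul cutWeight_smul k

theorem compl_mem_optimalCuts (hC : C ∈ optimalCuts β s) : Cᶜ ∈ optimalCuts β s := by
  obtain ⟨h, g, hg, hC⟩ := hC
  exact ⟨h, g, hg, hC.compl (isEnd_rayFilter hg h) (isEnd_rayFilter_inv hg h) cutWeight_compl⟩

theorem not_crossing_of_mem_optimalCuts (hβ : Function.Surjective β) {D : Set G}
    (hC : C ∈ optimalCuts β s) (hD : D ∈ optimalCuts β s) : ¬Crossing C D := by
  obtain ⟨h, g, hg, hC⟩ := hC
  obtain ⟨k, f, hf, hD⟩ := hD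
  exact hC.not_crossing hβ (isEnd_rayFilter hg h) (isEnd_rayFilter_inv hg h)
    (isEnd_rayFilter hf k) (isEnd_rayFilter_inv hf k) hD

/-- A bound, uniform over all translates of infinite cyclic subgroups, on the size of the cuts
needed to separate their two ends. -/
def RaysSeparatedWithin (s : ι → G) (N : ℕ) : Prop :=
  ∀ h g : G, ¬IsOfFinOrder g → ∃ C, AlmostInvariant C ∧
    Separates (rayFilter h g) (rayFilter h g⁻¹) C ∧ cutSize s C ≤ N

theorem exists_finite_reps_optimalCuts (hs : Subgroup.closure (Set.range s) = ⊤) {B : Set G}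
    (hBf : B.Finite) (hB : IsSplittingWindow s B) {N : ℕ} (hN : RaysSeparatedWithin s N) :
    ∃ A : Set (Set G), A.Finite ∧ A ⊆ optimalCuts β s ∧
      ∀ C ∈ optimalCuts β s, ∃ D ∈ A, C ∈ MulAction.orbit G D := by
  refine ⟨_, (finite_isMinimalCut hs hBf hB N).inter_of_right (optimalCuts β s),
    Set.inter_subset_left, fun C hC => ?_⟩
  have hmin := isMinimalCut_of_mem_optimalCuts hC
  obtain ⟨k, hk⟩ := hmin.exists_one_mem_boundary_smul hs
  refine ⟨k • C, ⟨smul_mem_optimalCuts k hC, hmin.smul k, ?_, hk⟩, k⁻¹, inv_smul_smul k C⟩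
  obtain ⟨h, g, hg, hC⟩ := hC
  obtain ⟨D, hD, hsep, hsize⟩ := hN h g hg
  rw [cutSize_smul]
  exact (cutSize_le_of_cutWeight_le (hC.le D hD hsep)).trans hsize

theorem finite_separating_of_finite_reps {F A : Set (Set G)} (hA : A.Finite)
    (hAI : ∀ D ∈ A, AlmostInvariant D) (hF : ∀ C ∈ F, ∃ D ∈ A, C ∈ MulAction.orbit G D)
    (x y : G) : {C ∈ F | x ∈ C ∧ y ∉ C}.Finite := by
  refine (hA.biUnion fun D hD =>
    (hAI D hD (x⁻¹ * y)).image fun k : G => (x * k⁻¹) • D).subset ?_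
  rintro C ⟨hC, hx, hy⟩
  obtain ⟨D, hD, g, rfl⟩ := hF C hC
  refine Set.mem_biUnion hD ⟨g⁻¹ * x, ?_, by simp⟩
  simp only [Set.mem_smul_set_iff_inv_smul_mem, smul_eq_mul] at hx hy
  rw [mem_rightBoundary, mul_assoc, mul_inv_cancel_left]
  exact fun h => hy (h.1 hx)

theorem exists_optimalCut_of_not_isOfFinOrder (hs : Subgroup.closure (Set.range s) = ⊤)
    {B : Set G} (hBf : B.Finite) (hB : IsSplittingWindow s B) {N : ℕ}
    (hN : RaysSeparatedWithin s N) {g : G} (hg : ¬IsOfFinOrder g) :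
    ∃ C ∈ optimalCuts β s, C ∈ rayFilter 1 g ∧ Cᶜ ∈ rayFilter 1 g⁻¹ := by
  have hl := isEnd_rayFilter hg 1
  have hl' := isEnd_rayFilter_inv hg 1
  obtain ⟨D, hD, hsep, -⟩ := hN 1 g hg
  obtain ⟨C, hC⟩ := exists_isOptimalCut_cutWeight hs hBf hB β hl hl' ⟨D, hD, hsep⟩
  have hmem : C ∈ optimalCuts β s := ⟨1, g, hg, hC⟩
  have hsepC := hC.separates
  by_cases hCg : C ∈ rayFilter 1 g
  · refine ⟨C, hmem, hCg, (hl'.compl_mem_iff hC.almostInvariant).2 ?_⟩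
    exact fun h => hsepC (iff_of_true hCg h)
  · refine ⟨Cᶜ, compl_mem_optimalCuts hmem, (hl.compl_mem_iff hC.almostInvariant).2 hCg, ?_⟩
    rw [_root_.compl_compl]
    exact not_not.1 fun h => hsepC (iff_of_false hCg h)

/-- The optimal cuts as a nested family. -/
def optimalCutsFamily (hβ : Function.Surjective β) (hs : Subgroup.closure (Set.range s) = ⊤)
    {B : Set G} (hBf : B.Finite) (hB : IsSplittingWindow s B) {N : ℕ}
    (hN : RaysSeparatedWithin s N)
    (hinf : ∀ K : Subgroup G, Infinite K → ∃ g ∈ K, ¬IsOfFinOrder g) : NestedFamily G G where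
  cuts := optimalCuts β s
  smul_mem k _ := smul_mem_optimalCuts k
  compl_mem _ := compl_mem_optimalCuts
  nested _ hC _ hD := not_not.1 (not_crossing_of_mem_optimalCuts hβ hC hD)
  nonempty_of_mem C hC := by
    obtain ⟨l, l', hl, hl', h⟩ := isMinimalCut_of_mem_optimalCuts hC
    have := hl.neBot
    have := hl'.neBot
    rw [Set.nonempty_iff_ne_empty]
    rintro rfl
    exact h.separates (iff_of_false (empty_notMem l) (empty_notMem l'))
  finite_separating := by
    obtain ⟨A, hA, hsub, hreps⟩ := exists_finite_reps_optimalCuts (β := β) hs hBf hB hN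
    refine finite_separating_of_finite_reps hA (fun D hD => ?_) hreps
    obtain ⟨_, _, _, _, h⟩ := isMinimalCut_of_mem_optimalCuts (hsub hD)
    exact h.almostInvariant
  exists_finite_reps := exists_finite_reps_optimalCuts hs hBf hB hN
  exists_smul_ssubset K hK := by
    obtain ⟨g, hgK, hg⟩ := hinf K hK
    obtain ⟨C, hC, hCg, hCg'⟩ :=
      exists_optimalCut_of_not_isOfFinOrder (β := β) hs hBf hB hN hg
    obtain ⟨n, hn⟩ := exists_pow_smul_ssubset hCg hCg' fun n =>
      not_crossing_of_mem_optimalCuts hβ (smul_mem_optimalCuts (g ^ n) hC) hC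
    exact ⟨g ^ n, K.pow_mem hgK n, C, hC, hn⟩

end OptimalCuts

/-! ### Cuts in virtually free groups -/

section FreeGroupCuts

variable {α : Type*} [DecidableEq α]

/-- The reduced words whose first letter is `x`. -/
def wordsStartingWith (x : α × Bool) : Set (FreeGroup α) := {w | w.toWord.head? = some x}

theorem head?_toWord_mul_of {w : FreeGroup α} {y : α} (h1 : w ≠ 1) (hy : w ≠ (FreeGroup.of y)⁻¹) :
    (w * FreeGroup.of y).toWord.head? = w.toWord.head? := by
  have hw : w.toWord ≠ [] := mt FreeGroup.toWord_eq_nil_iff.1 h1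
  have hred : FreeGroup.IsReduced w.toWord := FreeGroup.isReduced_toWord
  obtain ⟨L, a, hL⟩ : ∃ L a, w.toWord = L ++ [a] :=
    ⟨_, _, (List.dropLast_append_getLast hw).symm⟩
  have hmk : w = FreeGroup.mk L * FreeGroup.mk [a] := by
    rw [FreeGroup.mul_mk, ← hL, FreeGroup.mk_toWord]
  by_cases ha : a = (y, false)
  · subst ha
    have hcancel : w * FreeGroup.of y = FreeGroup.mk L := by
      rw [hmk]
      exact inv_mul_cancel_right (FreeGroup.mk L) (FreeGroup.of y)
    have hLred : FreeGroup.IsReduced L := List.IsChain.left_of_append (hL ▸ hred)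
    have hLne : L ≠ [] := by
      rintro rfl
      exact hy (hmk.trans (one_mul _))
    rw [hcancel, FreeGroup.toWord_mk, hLred.reduce_eq, hL, List.head?_append_of_ne_nil _ hLne]
  · have hay : FreeGroup.IsReduced [a, (y, true)] := by
      refine FreeGroup.isReduced_cons_cons.2 ⟨fun h => ?_, FreeGroup.IsReduced.singleton⟩
      exact Bool.eq_true_of_not_eq_false fun h' => ha (Prod.ext h h')
    have hconcat : FreeGroup.IsReduced (w.toWord ++ [(y, true)]) := by
      rw [hL]
      exact (hL ▸ hred).append_overlap hay (List.cons_ne_nil a [])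
    rw [FreeGroup.toWord_mul, FreeGroup.toWord_of, hconcat.reduce_eq,
      List.head?_append_of_ne_nil _ hw]

theorem almostInvariant_wordsStartingWith (x : α × Bool) :
    AlmostInvariant (wordsStartingWith x) := by
  refine almostInvariant_of_closure (FreeGroup.closure_range_of α) (Set.forall_mem_range.2 ?_)
  refine fun y => (Set.toFinite {1, (FreeGroup.of y)⁻¹}).subset fun w hw => ?_
  by_contra hne
  simp only [Set.mem_insert_iff, Set.mem_singleton_iff, not_or] at hne
  rw [mem_rightBoundary, wordsStartingWith, Set.mem_ofPred_eq, Set.mem_ofPred_eq,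
    head?_toWord_mul_of hne.1 hne.2] at hw
  exact hw Iff.rfl

theorem toWord_mk_pow_of_isCyclicallyReduced {L : List (α × Bool)}
    (hL : FreeGroup.IsCyclicallyReduced L) (n : ℕ) :
    (FreeGroup.mk L ^ n).toWord = (List.replicate n L).flatten := by
  rw [FreeGroup.toWord_pow, FreeGroup.toWord_mk, hL.isReduced.reduce_eq,
    (hL.flatten_replicate n).isReduced.reduce_eq]

theorem mk_pow_mem_wordsStartingWith {L : List (α × Bool)} (hL : FreeGroup.IsCyclicallyReduced L)
    (hne : L ≠ []) {n : ℕ} (hn : n ≠ 0) :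
    FreeGroup.mk L ^ n ∈ wordsStartingWith (L.head hne) := by
  rw [wordsStartingWith, Set.mem_ofPred_eq, toWord_mk_pow_of_isCyclicallyReduced hL,
    List.head?_flatten_replicate hn, List.head?_eq_some_head hne]

theorem mk_inv_pow_notMem_wordsStartingWith {L : List (α × Bool)}
    (hL : FreeGroup.IsCyclicallyReduced L) (hne : L ≠ []) {n : ℕ} (hn : n ≠ 0) :
    (FreeGroup.mk L)⁻¹ ^ n ∉ wordsStartingWith (L.head hne) := by
  intro h
  rw [wordsStartingWith, Set.mem_ofPred_eq, inv_pow, FreeGroup.toWord_inv,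
    toWord_mk_pow_of_isCyclicallyReduced hL, FreeGroup.invRev, List.head?_reverse,
    List.getLast?_map, List.getLast?_flatten_replicate hn, List.getLast?_eq_some_getLast hne,
    Option.map_some, Option.some_inj, Prod.ext_iff] at h
  have hcyc := hL.2 _ (List.getLast?_eq_some_getLast hne) _ (List.head?_eq_some_head hne) h.1
  exact Bool.not_ne_self _ (h.2.trans hcyc.symm)

theorem exists_conj_mk_isCyclicallyReduced {α : Type*} {w : FreeGroup α} (hw : w ≠ 1) :
    ∃ (u : FreeGroup α) (L : List (α × Bool)), FreeGroup.IsCyclicallyReduced L ∧ L ≠ [] ∧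
      w = u * FreeGroup.mk L * u⁻¹ := by
  classical
  have hconj := FreeGroup.reduceCyclically.conj_conjugator_reduceCyclically w.toWord
  set L := FreeGroup.reduceCyclically w.toWord
  have hwL : w = FreeGroup.mk (FreeGroup.reduceCyclically.conjugator w.toWord) *
      FreeGroup.mk L * (FreeGroup.mk (FreeGroup.reduceCyclically.conjugator w.toWord))⁻¹ := by
    rw [FreeGroup.inv_mk, FreeGroup.mul_mk, FreeGroup.mul_mk, hconj, FreeGroup.mk_toWord]
  refine ⟨_, L, FreeGroup.reduceCyclically.isCyclicallyReduced FreeGroup.isReduced_toWord,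
    fun hnil => hw ?_, hwL⟩
  rw [hwL, hnil, ← FreeGroup.one_eq_mk, mul_one, mul_inv_cancel]

theorem exists_separates_wordsStartingWith {w : FreeGroup α} (hw : w ≠ 1) :
    ∃ u x, Separates (rayFilter u w) (rayFilter u w⁻¹) (wordsStartingWith x) := by
  obtain ⟨u, L, hL, hne, rfl⟩ := exists_conj_mk_isCyclicallyReduced hw
  set c := FreeGroup.mk L
  have hc : ¬IsOfFinOrder c := not_isOfFinOrder_of_isMulTorsionFree fun hc => by
    simp [hc] at hw
  have hray : ∀ d C, ¬IsOfFinOrder d → AlmostInvariant C →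
      (C ∈ rayFilter u⁻¹ (u * d * u⁻¹) ↔ ∀ᶠ n in Filter.atTop, d ^ n ∈ C) := fun d C hd hC => by
    have hmul := eventually_mul_mem_iff_mem_rayFilter hd 1 u⁻¹ hC
    simp only [mem_rayFilter, one_mul] at hmul
    simp only [mem_rayFilter, conj_pow, ← mul_assoc, inv_mul_cancel, one_mul, hmul]
  have hAI := almostInvariant_wordsStartingWith (L.head hne)
  have hlarge := Filter.eventually_ne_atTop 0
  have hpos : wordsStartingWith (L.head hne) ∈ rayFilter u⁻¹ (u * c * u⁻¹) :=
    (hray c _ hc hAI).2 (hlarge.mono fun n => mk_pow_mem_wordsStartingWith hL hne)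
  have hneg : wordsStartingWith (L.head hne) ∉ rayFilter u⁻¹ (u * c * u⁻¹)⁻¹ := by
    rw [conj_inv, hray _ _ (mt isOfFinOrder_inv_iff.1 hc) hAI]
    intro h
    obtain ⟨n, hn, hn0⟩ := (h.and hlarge).exists
    exact mk_inv_pow_notMem_wordsStartingWith hL hne hn0 hn
  exact ⟨u⁻¹, _, fun h => hneg (h.1 hpos)⟩

end FreeGroupCuts

section VirtuallyFree

open ExtensionPresentation
open scoped Pointwise

variable {G : Type*} [Group G] {K : Subgroup G}

theorem not_isOfFinOrder_coe [IsMulTorsionFree K] {f : K} (hf : f ≠ 1) :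
    ¬IsOfFinOrder (f : G) := by
  rw [Submonoid.isOfFinOrder_coe]
  exact not_isOfFinOrder_of_isMulTorsionFree hf

theorem exists_not_isOfFinOrder_of_infinite [K.FiniteIndex] [IsMulTorsionFree K] (H : Subgroup G)
    [Infinite H] : ∃ g ∈ H, ¬IsOfFinOrder g := by
  obtain ⟨x, y, hxy, h⟩ := Finite.exists_ne_map_eq_of_infinite fun x : H => ((x : G) : G ⧸ K)
  have hmem : (x : G)⁻¹ * y ∈ K := QuotientGroup.eq.1 h
  refine ⟨(x : G)⁻¹ * y, H.mul_mem (H.inv_mem x.2) y.2,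
    not_isOfFinOrder_coe (f := ⟨_, hmem⟩) fun h1 => hxy (Subtype.ext ?_)⟩
  exact inv_mul_eq_one.1 (congrArg Subtype.val h1)

variable {κ : Type*}

theorem isMulTorsionFree_of_freeGroupBasis {F : Type*} [Group F] (b : FreeGroupBasis κ F) :
    IsMulTorsionFree F :=
  b.repr.injective.isMulTorsionFree b.repr.toMonoidHom

variable [K.Normal] (b : FreeGroupBasis κ K)

/-- A `K`-equivariant retraction of `G` onto the normal free subgroup `K`, expressed in the
basis `b`. -/
noncomputable def freePart (g : G) : FreeGroup κ := b.repr (kernelPart K g)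

theorem freePart_mul (f : K) (g : G) : freePart b (f * g) = b.repr f * freePart b g := by
  have hcoset : ((f * g : G) : G ⧸ K) = g := by
    rw [QuotientGroup.mk_mul, (QuotientGroup.eq_one_iff _).2 f.2, one_mul]
  rw [freePart, freePart, ← map_mul]
  refine congrArg b.repr (Subtype.ext ?_)
  simp only [kernelPart, hcoset, Subgroup.coe_mul, mul_assoc]

theorem AlmostInvariant.preimage_freePart [K.FiniteIndex] {E : Set (FreeGroup κ)}
    (hE : AlmostInvariant E) : AlmostInvariant (freePart b ⁻¹' E) := fun t => by
  have hfin : (⋃ q : G ⧸ K, (fun w => (b.repr.symm w : G) * q.out) ''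
      rightBoundary (freePart b (q.out * t)) E).Finite :=
    Set.finite_iUnion fun q => (hE _).image _
  refine hfin.subset fun g hg => Set.mem_iUnion.2 ⟨g, freePart b g, ?_, ?_⟩
  · rw [mem_rightBoundary, Set.mem_preimage, Set.mem_preimage] at hg
    rw [mem_rightBoundary, freePart, ← freePart_mul, ← mul_assoc, kernelPart_mul_out]
    exact hg
  · simp [freePart]

theorem preimage_freePart_mem_rayFilter_iff {k f : K} (hf : ¬IsOfFinOrder f)
    {E : Set (FreeGroup κ)} (hE : AlmostInvariant E) :
    freePart b ⁻¹' E ∈ rayFilter (k : G) (f : G) ↔ E ∈ rayFilter (b.repr k) (b.repr f) := by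
  have hf' : ¬IsOfFinOrder (b.repr f) := by
    rwa [← MulEquiv.coe_toMonoidHom, b.repr.injective.isOfFinOrder_iff (f := b.repr.toMonoidHom)]
  rw [← eventually_mul_mem_iff_mem_rayFilter hf' (b.repr k) (freePart b 1) hE, mem_rayFilter]
  refine Filter.eventually_congr (Filter.Eventually.of_forall fun n => ?_)
  rw [← map_pow, ← map_mul, ← freePart_mul, mul_one]
  rfl

theorem exists_raysSeparatedWithin [K.FiniteIndex] [Finite κ] (b : FreeGroupBasis κ K)
    {ι : Type*} [Fintype ι] (s : ι → G) : ∃ N, RaysSeparatedWithin s N := by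
  classical
  have := Fintype.ofFinite κ
  have : IsMulTorsionFree K := isMulTorsionFree_of_freeGroupBasis b
  refine ⟨∑ x : κ × Bool, cutSize s (freePart b ⁻¹' wordsStartingWith x), fun h g hg => ?_⟩
  obtain ⟨n, hn, -, hgn⟩ := Subgroup.exists_pow_mem_of_index_ne_zero
    (Subgroup.FiniteIndex.index_ne_zero (H := K)) g
  set f : K := ⟨g ^ n, hgn⟩
  have hf1 : f ≠ 1 := fun hf1 =>
    hg (isOfFinOrder_iff_pow_eq_one.2 ⟨n, hn, congrArg Subtype.val hf1⟩)
  have hf : ¬IsOfFinOrder f := not_isOfFinOrder_of_isMulTorsionFree hf1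
  obtain ⟨u, x, hux⟩ :=
    exists_separates_wordsStartingWith (mt (map_eq_one_iff _ b.repr.injective).1 hf1)
  have hE := almostInvariant_wordsStartingWith x
  have hC := hE.preimage_freePart b
  have hsep : Separates (rayFilter (b.repr.symm u : G) g) (rayFilter (b.repr.symm u : G) g⁻¹)
      (freePart b ⁻¹' wordsStartingWith x) := by
    rw [Separates, ← mem_rayFilter_pow_iff hg _ hn hC,
      ← mem_rayFilter_pow_iff (mt isOfFinOrder_inv_iff.1 hg) _ hn hC, inv_pow]
    change ¬(_ ∈ rayFilter _ (f : G) ↔ _ ∈ rayFilter _ ((f⁻¹ : K) : G))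
    rwa [preimage_freePart_mem_rayFilter_iff b hf hE,
      preimage_freePart_mem_rayFilter_iff b (mt isOfFinOrder_inv_iff.1 hf) hE, map_inv,
      MulEquiv.apply_symm_apply]
  refine ⟨(h * (b.repr.symm u : G)⁻¹) • _, hC.smul _, ?_, ?_⟩
  · rw [← separates_smul_iff (k := h * (b.repr.symm u : G)⁻¹), smul_rayFilter, smul_rayFilter,
      inv_mul_cancel_right] at hsep
    exact hsep
  · rw [cutSize_smul]
    exact Finset.single_le_sum (f := fun x => cutSize s (freePart b ⁻¹' wordsStartingWith x))
      (fun _ _ => Nat.zero_le _) (Finset.mem_univ x)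

theorem VirtuallyFree.exists_nestedFamily [Infinite G] (hfg : Group.FG G)
    (hvf : VirtuallyFree G) : ∃ F : NestedFamily G G, F.cuts.Nonempty := by
  obtain ⟨K, _, _, m, ⟨b⟩⟩ := hvf.exists_normal_basis hfg
  have : IsMulTorsionFree K := isMulTorsionFree_of_freeGroupBasis b
  obtain ⟨n, φ, hφ, R, hRf, hR⟩ := (isFinitelyPresented_of_basis K b).out
  obtain ⟨s, rfl⟩ := FreeGroup.lift.surjective φ
  have hs : Subgroup.closure (Set.range s) = ⊤ :=
    FreeGroup.lift_surjective_iff_closure_range_eq_top.1 hφ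
  have : Countable G := hφ.countable
  obtain ⟨β, hβ⟩ := exists_surjective_nat G
  obtain ⟨B, hBf, hB⟩ := exists_finite_isSplittingWindow hφ hRf hR
  obtain ⟨N, hN⟩ := exists_raysSeparatedWithin b s
  have hinf (H : Subgroup G) (_ : Infinite H) : ∃ g ∈ H, ¬IsOfFinOrder g :=
    exists_not_isOfFinOrder_of_infinite (K := K) H
  have : Infinite (⊤ : Subgroup G) := Subgroup.topEquiv.toEquiv.infinite_iff.2 ‹_›
  obtain ⟨g, -, hg⟩ := hinf ⊤ this
  obtain ⟨C, hC, -⟩ := exists_optimalCut_of_not_isOfFinOrder hs hBf hB hN hg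
  exact ⟨optimalCutsFamily hβ hs hBf hB hN hinf, C, hC⟩

theorem rigid_of_finite (G : Type*) [Group G] [Finite G] : Rigid G := fun φ hφ => by
  obtain ⟨g, hg⟩ := hφ ⊤ (Set.toFinite _)
  refine Finite.injective_iff_bijective.1 fun x y hxy => ?_
  have hx : x = g * φ x * g⁻¹ := hg x (Subgroup.mem_top x)
  rw [hx, hxy]
  exact (hg y (Subgroup.mem_top y)).symm

theorem VirtuallyFree.rigid (hfg : Group.FG G) (hvf : VirtuallyFree G) (hco : CoHopfian G) :
    Rigid G := by
  rcases finite_or_infinite G with _ | _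
  · exact rigid_of_finite G
  · obtain ⟨F, hF⟩ := hvf.exists_nestedFamily hfg
    exact F.rigid hF hco

theorem VirtuallyFree.finiteSubgroupsConjBounded (hfg : Group.FG G) (hvf : VirtuallyFree G) :
    FiniteSubgroupsConjBounded G := by
  rcases finite_or_infinite G with _ | _
  · exact ⟨Set.univ, Set.finite_univ, fun _ _ => ⟨1, fun _ _ => Set.mem_univ _⟩⟩
  · obtain ⟨F, hF⟩ := hvf.exists_nestedFamily hfg
    exact F.finiteSubgroupsConjBounded hF

end VirtuallyFree

/-! ### Transfer of homomorphisms by `∀∃`-sentences -/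

section Formulas

theorem isQF_iSup {L : FirstOrder.Language} {α β : Type*} [Finite β] {n : ℕ}
    {f : β → L.BoundedFormula α n} (hf : ∀ b, (f b).IsQF) : (BoundedFormula.iSup f).IsQF := by
  have isQF_foldr (l : List (L.BoundedFormula α n)) (hl : ∀ φ ∈ l, φ.IsQF) :
      (l.foldr (· ⊔ ·) ⊥).IsQF := by
    induction l with
    | nil => exact BoundedFormula.isQF_bot
    | cons φ l ih =>
      rw [List.forall_mem_cons] at hl
      exact hl.1.sup (ih hl.2)
  refine isQF_foldr _ fun φ hφ => ?_
  obtain ⟨b, -, rfl⟩ := List.mem_map.1 hφ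
  exact hf b

theorem isQF_iInf {L : FirstOrder.Language} {α β : Type*} [Finite β] {n : ℕ}
    {f : β → L.BoundedFormula α n} (hf : ∀ b, (f b).IsQF) : (BoundedFormula.iInf f).IsQF := by
  have isQF_foldr (l : List (L.BoundedFormula α n)) (hl : ∀ φ ∈ l, φ.IsQF) :
      (l.foldr (· ⊓ ·) ⊤).IsQF := by
    induction l with
    | nil => exact BoundedFormula.IsQF.top
    | cons φ l ih =>
      rw [List.forall_mem_cons] at hl
      exact hl.1.inf (ih hl.2)
  refine isQF_foldr _ fun φ hφ => ?_
  obtain ⟨b, -, rfl⟩ := List.mem_map.1 hφ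
  exact hf b

theorem IsAE.alls {α : Type*} :
    ∀ {n : ℕ} {φ : groupLang.BoundedFormula α n}, IsAE φ → IsAE φ.alls
  | 0, _, h => h
  | _ + 1, φ, h => IsAE.alls (φ := φ.all) (IsAE.all h)

/-- The term of the language of groups spelling a word, in the encoding of words used by
`FreeGroup`: `(a, true)` stands for `a` and `(a, false)` for `a⁻¹`. -/
def wordTerm {α : Type*} : List (α × Bool) → groupLang.Term α
  | [] => Term.func (L := groupLang) GroupFunc.one ![]
  | (a, true) :: w => Term.func (L := groupLang) GroupFunc.mul ![Term.var a, wordTerm w]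
  | (a, false) :: w => Term.func (L := groupLang) GroupFunc.mul
      ![Term.func (L := groupLang) GroupFunc.inv ![Term.var a], wordTerm w]

theorem realize_wordTerm {α G : Type*} [Group G] (v : α → G) (w : List (α × Bool)) :
    (wordTerm w).realize v = FreeGroup.lift v (FreeGroup.mk w) := by
  induction w with
  | nil => rfl
  | cons a w ih =>
    obtain ⟨a, _ | _⟩ := a
    · change (v a)⁻¹ * (wordTerm w).realize v = _
      simp [ih]
    · change v a * (wordTerm w).realize v = _
      simp [ih]

/-- The atomic formula `w = 1`, for a word `w` in the variables `x₀, …, xₙ₋₁`. -/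
def wordEqOne {n : ℕ} (w : FreeGroup (Fin n)) : groupLang.BoundedFormula Empty n :=
  ((wordTerm w.toWord).relabel Sum.inr).bdEqual (wordTerm [])

theorem isQF_wordEqOne {n : ℕ} (w : FreeGroup (Fin n)) : (wordEqOne w).IsQF :=
  (BoundedFormula.IsAtomic.equal _ _).isQF

theorem realize_wordEqOne {G : Type*} [Group G] {n : ℕ} (w : FreeGroup (Fin n)) (v : Empty → G)
    (x : Fin n → G) : (wordEqOne w).Realize v x ↔ FreeGroup.lift x w = 1 := by
  rw [wordEqOne, BoundedFormula.realize_bdEqual, Term.realize_relabel, realize_wordTerm,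
    realize_wordTerm, FreeGroup.mk_toWord, Sum.elim_comp_inr, ← FreeGroup.one_eq_mk, map_one]

end Formulas

section TupleConj

variable {ι G H : Type*} [Group G] [Group H]

/-- Two tuples of elements of a group are conjugate if a single element conjugates the one to
the other. -/
def TupleConj (p q : ι → G) : Prop := ∃ y : G, ∀ l, y * p l * y⁻¹ = q l

theorem TupleConj.refl (p : ι → G) : TupleConj p p := ⟨1, fun l => by group⟩

theorem TupleConj.symm {p q : ι → G} : TupleConj p q → TupleConj q p := fun ⟨y, hy⟩ =>
  ⟨y⁻¹, fun l => by rw [← hy l]; group⟩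

theorem TupleConj.trans {p q r : ι → G} : TupleConj p q → TupleConj q r → TupleConj p r :=
  fun ⟨y, hy⟩ ⟨z, hz⟩ => ⟨z * y, fun l => by rw [← hz l, ← hy l]; group⟩

theorem TupleConj.map (θ : G →* H) {p q : ι → G} : TupleConj p q → TupleConj (θ ∘ p) (θ ∘ q) :=
  fun ⟨y, hy⟩ => ⟨θ y, fun l => by simp only [Function.comp_apply, ← hy l, map_mul, map_inv]⟩

/-- A tuple of elements of a group generates a finite subgroup. -/
def GeneratesFinite (p : ι → G) : Prop := (Subgroup.closure (Set.range p) : Set G).Finite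

theorem GeneratesFinite.map (θ : G →* H) {p : ι → G} (hp : GeneratesFinite p) :
    GeneratesFinite (θ ∘ p) := by
  rw [GeneratesFinite, Set.range_comp, ← MonoidHom.map_closure, Subgroup.coe_map]
  exact Set.Finite.image _ hp

theorem generatesFinite_of_forall_mem {K : Subgroup G} (hK : (K : Set G).Finite) {p : ι → G}
    (hp : ∀ l, p l ∈ K) : GeneratesFinite p :=
  hK.subset (Subgroup.closure_le K |>.2 (Set.range_subset_iff.2 hp))

theorem FiniteSubgroupsConjBounded.exists_tupleConj (hG : FiniteSubgroupsConjBounded G) :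
    ∃ B : Set G, B.Finite ∧ ∀ p : ι → G, GeneratesFinite p →
      ∃ q : ι → B, TupleConj p fun l => (q l : G) := by
  obtain ⟨B, hB, hconj⟩ := hG
  refine ⟨B, hB, fun p hp => ?_⟩
  obtain ⟨y, hy⟩ := hconj _ hp
  exact ⟨fun l => ⟨_, hy _ (Subgroup.subset_closure ⟨l, rfl⟩)⟩, y, fun l => rfl⟩

theorem FiniteSubgroupsConjBounded.exists_card_le (hG : FiniteSubgroupsConjBounded G) :
    ∃ k, ∀ K : Subgroup G, (K : Set G).Finite → Nat.card K ≤ k := by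
  obtain ⟨B, hB, hconj⟩ := hG
  refine ⟨B.ncard, fun K hK => ?_⟩
  obtain ⟨y, hy⟩ := hconj K hK
  exact Set.ncard_le_ncard_of_injOn (fun h => y * h * y⁻¹) hy
    (fun a _ b _ hab => mul_left_cancel (mul_right_cancel hab)) hB

/-- A homomorphism reflects conjugacy of `ι`-tuples if two tuples, each generating a finite
subgroup, are conjugate as soon as their images are. -/
def ReflectsTupleConj (ι : Type*) (θ : G →* H) : Prop :=
  ∀ p q : ι → G, GeneratesFinite p → GeneratesFinite q → TupleConj (θ ∘ p) (θ ∘ q) → TupleConj p q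

theorem ReflectsTupleConj.comp {K : Type*} [Group K] {ψ : H →* K} {θ : G →* H}
    (hψ : ReflectsTupleConj ι ψ) (hθ : ReflectsTupleConj ι θ) : ReflectsTupleConj ι (ψ.comp θ) :=
  fun p q hp hq h => hθ p q hp hq (hψ _ _ (hp.map θ) (hq.map θ) h)

end TupleConj

section Transfer

/-- The word `y p y⁻¹ q⁻¹` in `n + 1` variables, of which `y` is the last. -/
def conjWord {n : ℕ} (p q : FreeGroup (Fin n)) : FreeGroup (Fin (n + 1)) :=
  FreeGroup.of (Fin.last n) * FreeGroup.map Fin.castSucc p * (FreeGroup.of (Fin.last n))⁻¹ *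
    (FreeGroup.map Fin.castSucc q)⁻¹

theorem lift_snoc_map_castSucc {G : Type*} [Group G] {n : ℕ} (x : Fin n → G) (y : G)
    (w : FreeGroup (Fin n)) : FreeGroup.lift (Fin.snoc x y : Fin (n + 1) → G)
      (FreeGroup.map Fin.castSucc w) = FreeGroup.lift x w := by
  rw [← MonoidHom.comp_apply]
  congr 1
  ext i
  simp

theorem lift_snoc_conjWord_eq_one_iff {G : Type*} [Group G] {n : ℕ} (p q : FreeGroup (Fin n))
    (x : Fin n → G) (y : G) :
    FreeGroup.lift (Fin.snoc x y : Fin (n + 1) → G) (conjWord p q) = 1 ↔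
      y * FreeGroup.lift x p * y⁻¹ = FreeGroup.lift x q := by
  simp only [conjWord, map_mul, map_inv, FreeGroup.lift_apply_of, Fin.snoc_last,
    lift_snoc_map_castSucc, mul_inv_eq_one]

variable {n : ℕ} {I J ι : Type*} [Finite I] [Finite J] [Finite ι]

/-- The quantifier-free formula, with last variable `y`, saying that one of the relators `r i`
is nontrivial or that `y` conjugates one of the tuples `p j` to `q j`. -/
noncomputable def relatorOrConjFormula (r : I → FreeGroup (Fin n))
    (p q : J → ι → FreeGroup (Fin n)) : groupLang.BoundedFormula Empty (n + 1) :=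
  (BoundedFormula.iSup fun i => (wordEqOne (FreeGroup.map Fin.castSucc (r i))).not) ⊔
    (BoundedFormula.iSup fun j => BoundedFormula.iInf fun l =>
      wordEqOne (conjWord (p j l) (q j l)))

theorem isAE_relatorOrConjFormula (r : I → FreeGroup (Fin n)) (p q : J → ι → FreeGroup (Fin n)) :
    IsAE (relatorOrConjFormula r p q).ex.alls :=
  IsAE.alls <| IsAE.of_existential <| IsExistentialQF.ex <| IsExistentialQF.of_isQF <|
    (isQF_iSup fun _ => (isQF_wordEqOne _).not).sup
      (isQF_iSup fun _ => isQF_iInf fun _ => isQF_wordEqOne _)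

theorem models_relatorOrConjFormula_iff {G : Type*} [Group G] (r : I → FreeGroup (Fin n))
    (p q : J → ι → FreeGroup (Fin n)) :
    G ⊨ ((relatorOrConjFormula r p q).ex.alls : groupLang.Sentence) ↔
      ∀ ψ : FreeGroup (Fin n) →* G,
        (∃ i, ψ (r i) ≠ 1) ∨ ∃ j, TupleConj (ψ ∘ p j) (ψ ∘ q j) := by
  rw [Sentence.Realize, BoundedFormula.realize_alls,
    FreeGroup.lift.forall_congr_left]
  refine forall_congr' fun x => ?_
  simp only [BoundedFormula.realize_ex, relatorOrConjFormula, BoundedFormula.realize_sup,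
    BoundedFormula.realize_iSup, BoundedFormula.realize_iInf, BoundedFormula.realize_not,
    realize_wordEqOne, lift_snoc_map_castSucc, lift_snoc_conjWord_eq_one_iff, exists_or,
    exists_const, Equiv.apply_symm_apply]
  rw [exists_comm]
  rfl

theorem AEEquivalent.symm {G G' : Type*} [Group G] [Group G'] (h : AEEquivalent G G') :
    AEEquivalent G' G := fun φ hφ => (h φ hφ).symm

theorem AEEquivalent.exists_hom_of_relators {G G' : Type*} [Group G] [Group G']
    (hAE : AEEquivalent G G') (r : I → FreeGroup (Fin n)) (p q : J → ι → FreeGroup (Fin n))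
    (φ : FreeGroup (Fin n) →* G) (hr : ∀ i, φ (r i) = 1)
    (hpq : ∀ j, ¬ TupleConj (φ ∘ p j) (φ ∘ q j)) :
    ∃ φ' : FreeGroup (Fin n) →* G', (∀ i, φ' (r i) = 1) ∧
      ∀ j, ¬ TupleConj (φ' ∘ p j) (φ' ∘ q j) := by
  have h := hAE _ (isAE_relatorOrConjFormula r p q)
  rw [models_relatorOrConjFormula_iff, models_relatorOrConjFormula_iff] at h
  by_contra! hcon
  have hG' (ψ : FreeGroup (Fin n) →* G') :
      (∃ i, ψ (r i) ≠ 1) ∨ ∃ j, TupleConj (ψ ∘ p j) (ψ ∘ q j) := by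
    by_contra! hψ
    exact (hcon ψ hψ.1).elim hψ.2
  rcases h.2 hG' φ with ⟨i, hi⟩ | ⟨j, hj⟩
  · exact hi (hr i)
  · exact hpq j hj

/-- Relators and the finitely many non-conjugate pairs of tuples in a set of representatives are
all that has to be preserved. -/
theorem AEEquivalent.exists_reflectsTupleConj {G G' : Type*} [Group G] [Group G']
    (hAE : AEEquivalent G G') [hfp : Group.IsFinitelyPresented G]
    (hG : FiniteSubgroupsConjBounded G) (ι : Type*) [Finite ι] :
    ∃ θ : G →* G', ReflectsTupleConj ι θ := by
  obtain ⟨n, φ, hφ, R, hRfin, hR⟩ := hfp.out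
  obtain ⟨B, hB, hconj⟩ := hG.exists_tupleConj (ι := ι)
  have := hB.to_subtype
  have := hRfin.to_subtype
  choose σ hσ using hφ
  have φσ (p : ι → B) : φ ∘ (fun l => σ (p l)) = fun l => (p l : G) := funext fun l => hσ _
  let J := {pq : (ι → B) × (ι → B) // ¬ TupleConj (fun l => (pq.1 l : G)) fun l => (pq.2 l : G)}
  obtain ⟨φ', hφ'R, hφ'J⟩ := hAE.exists_hom_of_relators (fun r : R => (r : FreeGroup (Fin n)))
    (fun (j : J) l => σ (j.1.1 l)) (fun (j : J) l => σ (j.1.2 l)) φ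
    (fun r => by rw [← MonoidHom.mem_ker, ← hR]; exact Subgroup.subset_normalClosure r.2)
    (fun j => by rw [φσ, φσ]; exact j.2)
  obtain ⟨θ, hθ⟩ := _root_.exists_hom_of_relators (fun g => ⟨σ g, hσ g⟩) hR φ'
    (fun r hr => hφ'R ⟨r, hr⟩)
  have θφ (p : ι → B) : φ' ∘ (fun l => σ (p l)) = θ ∘ fun l => (p l : G) := by
    rw [← φσ]
    exact funext fun l => (hθ _).symm
  refine ⟨θ, fun p q hp hq hpq => ?_⟩
  obtain ⟨p₀, hp₀⟩ := hconj p hp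
  obtain ⟨q₀, hq₀⟩ := hconj q hq
  have conj₀ : TupleConj (fun l => (p₀ l : G)) fun l => (q₀ l : G) := by
    by_contra hnot
    refine hφ'J ⟨(p₀, q₀), hnot⟩ ?_
    rw [θφ, θφ]
    exact ((hp₀.map θ).symm.trans hpq).trans (hq₀.map θ)
  exact (hp₀.trans conj₀).trans hq₀.symm

end Transfer

section Rigid

variable {G : Type*} [Group G]

theorem coe_homPow (f : G →* G) (n : ℕ) : ⇑(homPow f n) = f^[n] := by
  induction n with
  | zero => rfl
  | succ n ih => rw [Function.iterate_succ', ← ih]; rfl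

/-- Conjugacy on the tuples that generate finite subgroups. -/
def finiteTupleSetoid (ι G : Type*) [Group G] : Setoid {p : ι → G // GeneratesFinite p} where
  r p q := TupleConj p.1 q.1
  iseqv := ⟨fun p => .refl p.1, fun h => h.symm, fun h h' => h.trans h'⟩

theorem FiniteSubgroupsConjBounded.finite_quotient (hG : FiniteSubgroupsConjBounded G)
    (ι : Type*) [Finite ι] : Finite (Quotient (finiteTupleSetoid ι G)) := by
  obtain ⟨B, hB, hconj⟩ := hG.exists_tupleConj (ι := ι)
  have := hB.to_subtype
  choose rep hrep using fun p : {p : ι → G // GeneratesFinite p} => hconj p.1 p.2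
  refine Finite.of_injective (fun c : Quotient (finiteTupleSetoid ι G) => rep c.out)
    fun c d (hcd : rep c.out = rep d.out) => ?_
  have hc := hrep c.out
  rw [hcd] at hc
  rw [← c.out_eq, ← d.out_eq]
  exact Quotient.sound (hc.trans (hrep d.out).symm)

/-- `f` permutes the finitely many conjugacy classes of tuples generating finite subgroups. -/
theorem exists_pos_tupleConj_iterate {ι : Type*} [Finite ι] {f : G →* G}
    (hG : FiniteSubgroupsConjBounded G) (hf : ReflectsTupleConj ι f) :
    ∃ N, 0 < N ∧ ∀ p : ι → G, GeneratesFinite p → TupleConj (f^[N] ∘ p) p := by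
  let F (p : {p : ι → G // GeneratesFinite p}) : {p : ι → G // GeneratesFinite p} :=
    ⟨f ∘ p.1, p.2.map f⟩
  have coe_iterate (N : ℕ) (p) : (F^[N] p).1 = f^[N] ∘ p.1 := by
    induction N generalizing p with
    | zero => rfl
    | succ N ih => rw [Function.iterate_succ_apply, ih]; rfl
  have := hG.finite_quotient ι
  let Fq : Quotient (finiteTupleSetoid ι G) → Quotient (finiteTupleSetoid ι G) :=
    Quotient.map F fun _ _ h => h.map f
  have injective_Fq : Function.Injective Fq := by
    rintro ⟨p⟩ ⟨q⟩ hpq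
    exact Quotient.sound (hf p.1 q.1 p.2 q.2 (Quotient.exact hpq))
  let e := Equiv.ofBijective Fq (Finite.injective_iff_bijective.1 injective_Fq)
  refine ⟨orderOf e, orderOf_pos e, fun p hp => ?_⟩
  have iterate_mk : Fq^[orderOf e] ⟦⟨p, hp⟩⟧ = ⟦F^[orderOf e] ⟨p, hp⟩⟧ :=
    ((Function.Semiconj.iterate_right (f := Quotient.mk _) (fun _ => rfl) _) _).symm
  have iterate_eq : Fq^[orderOf e] = id := by
    rw [show Fq = e from rfl, Equiv.Perm.iterate_eq_pow, pow_orderOf_eq_one]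
    rfl
  rw [iterate_eq] at iterate_mk
  simpa only [coe_iterate] using (Quotient.exact iterate_mk).symm

theorem Rigid.bijective_of_reflectsTupleConj {k : ℕ} {f : G →* G} (hG : Rigid G)
    (hfin : FiniteSubgroupsConjBounded G)
    (hk : ∀ K : Subgroup G, (K : Set G).Finite → Nat.card K ≤ k)
    (hf : ReflectsTupleConj (Fin k) f) : Function.Bijective f := by
  obtain ⟨N, hN, hconj⟩ := exists_pos_tupleConj_iterate hfin hf
  have bijective_homPow : Function.Bijective (homPow f N) := hG _ fun K hK => by
    have := hK.to_subtype
    obtain ⟨p, hp⟩ : ∃ p : Fin k → K, Function.Surjective p :=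
      Function.exists_surjective_iff.2
        ⟨⟨fun _ => 1⟩, ⟨(Finite.equivFin K).toEmbedding.trans (Fin.castLEEmb (hk K hK))⟩⟩
    obtain ⟨y, hy⟩ := hconj (fun l => (p l : G))
      (generatesFinite_of_forall_mem hK fun l => (p l).2)
    refine ⟨y, fun h hh => ?_⟩
    obtain ⟨l, hl⟩ := hp ⟨h, hh⟩
    simpa only [MonoidHom.id_apply, Function.comp_apply, hl, ← coe_homPow] using (hy l).symm
  obtain ⟨M, rfl⟩ := Nat.exists_eq_succ_of_ne_zero hN.ne'
  rw [coe_homPow] at bijective_homPow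
  refine ⟨?_, ?_⟩
  · rw [Function.iterate_succ] at bijective_homPow
    exact bijective_homPow.1.of_comp
  · rw [Function.iterate_succ'] at bijective_homPow
    exact bijective_homPow.2.of_comp

/-- One and the same `k` serves both groups, so that both composites of `θ` and `ψ` are
bijective. -/
theorem AEEquivalent.nonempty_mulEquiv_of_rigid {G G' : Type*} [Group G] [Group G']
    [Group.IsFinitelyPresented G] [Group.IsFinitelyPresented G'] (hAE : AEEquivalent G G')
    (hfin : FiniteSubgroupsConjBounded G) (hfin' : FiniteSubgroupsConjBounded G')
    (hG : Rigid G) (hG' : Rigid G') : Nonempty (G ≃* G') := by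
  obtain ⟨k, hk⟩ := hfin.exists_card_le
  obtain ⟨k', hk'⟩ := hfin'.exists_card_le
  obtain ⟨θ, hθ⟩ := hAE.exists_reflectsTupleConj hfin (Fin (max k k'))
  obtain ⟨ψ, hψ⟩ := hAE.symm.exists_reflectsTupleConj hfin' (Fin (max k k'))
  have bijective_comp : Function.Bijective (ψ ∘ θ) := hG.bijective_of_reflectsTupleConj hfin
    (fun K hK => (hk K hK).trans (le_max_left k k')) (hψ.comp hθ)
  have bijective_comp' : Function.Bijective (θ ∘ ψ) := hG'.bijective_of_reflectsTupleConj hfin'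
    (fun K hK => (hk' K hK).trans (le_max_right k k')) (hθ.comp hψ)
  exact ⟨MulEquiv.ofBijective θ ⟨bijective_comp.1.of_comp, bijective_comp'.2.of_comp⟩⟩

end Rigid

theorem elementarilyEquivalent_of_mulEquiv {G G' : Type*} [Group G] [Group G'] (e : G ≃* G') :
    G ≅[groupLang] G' := by
  let f : groupLang.Equiv G G' :=
    { toEquiv := e.toEquiv
      map_fun' := fun s x => by
        cases (s : GroupFunc _) with
        | mul => exact map_mul e (x 0) (x 1)
        | inv => exact map_inv e (x 0)
        | one => exact map_one e
      map_rel' := fun r _ => Empty.elim r }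
  exact StrongHomClass.elementarilyEquivalent f

theorem VirtuallyFree.isFinitelyPresented {G : Type*} [Group G] (hvf : VirtuallyFree G)
    (hfg : Group.FG G) : Group.IsFinitelyPresented G := by
  obtain ⟨K, _, _, n, ⟨b⟩⟩ := hvf.exists_normal_basis hfg
  exact isFinitelyPresented_of_basis K b

/-- Two finitely generated co-Hopfian virtually free groups are ∀∃-equivalent iff
elementarily equivalent iff isomorphic. -/
theorem coHopfian_virtuallyFree_aeEquiv_iff_elemEquiv_iff_iso
    (G : Type*) (G' : Type*) [Group G] [Group G']
    (hfg : Group.FG G) (hfg' : Group.FG G')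
    (hvf : VirtuallyFree G) (hvf' : VirtuallyFree G')
    (hco : CoHopfian G) (hco' : CoHopfian G') :
    List.TFAE [AEEquivalent G G', G ≅[groupLang] G', Nonempty (G ≃* G')] := by
  have := hvf.isFinitelyPresented hfg
  have := hvf'.isFinitelyPresented hfg'
  tfae_have 1 → 3 := fun hAE => hAE.nonempty_mulEquiv_of_rigid
    (hvf.finiteSubgroupsConjBounded hfg) (hvf'.finiteSubgroupsConjBounded hfg')
    (hvf.rigid hfg hco) (hvf'.rigid hfg' hco')
  tfae_have 3 → 2 := fun ⟨e⟩ => elementarilyEquivalent_of_mulEquiv e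
  tfae_have 2 → 1 := fun h φ _ => elementarilyEquivalent_iff.1 h φ
  tfae_finish
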